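/- arXiv:2501.10953 — 5 statements merged into one kernel-verified Lean document; each statement's English description precedes it below -/
import Mathlib

section
/- Fix N > 0 and Γ > 0. Over all Borel probability measures P on ℝ with ∫ x² dP(x) ≤ Γ, the mutual information of the AWGN channel, defined as the Kullback–Leibler divergence D( J ‖ P ⊗ Q_P ) where J is the joint law of (X, X+Z) with X ~ P, Z ~ N(0,N) independent, and Q_P is the law of X+Z, attains its supremum, the supremum equals ½·log(1 + Γ/N), and it is attained by P = N(0, Γ) (a Gaussian with mean 0 and variance Γ), in which case the output law Q_P is N(0, Γ+N). -/
/-!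
If `P` has mean `m` and variance `σ²`, then the output law `Q` has mean `m` and variance `σ² + N`,
and the chain rule for the joint law `J` of input and output gives
`D(J ‖ P ⊗ G) = I(P) + D(Q ‖ G)` for every law `G`. When `G = N(m, σ² + N)`, the log-likelihood
ratio on the left is quadratic, so its mean depends only on second moments, and
`I(P) + D(Q ‖ N(m, σ² + N)) = ½ log (1 + σ² / N)`.
The divergence on the left is nonnegative and vanishes when `P` is Gaussian.
-/

open Real MeasureTheory ProbabilityTheory Classical

/-- Kullback–Leibler divergence (natural log): `∫ log(dμ/dν) dμ` when `μ ≪ ν` and the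
log-likelihood ratio is integrable, and `⊤` otherwise. -/
noncomputable def klDiv {α : Type*} [MeasurableSpace α] (μ ν : Measure α) : EReal :=
  if μ ≪ ν ∧ Integrable (llr μ ν) μ then ((∫ x, llr μ ν x ∂μ : ℝ) : EReal) else ⊤

/-- Joint law of `(X, X + Z)` where `X ~ P` and `Z ~ N(0,N)` independent. -/
noncomputable def jointLaw (N : ℝ) (P : Measure ℝ) : Measure (ℝ × ℝ) :=
  (P.prod (gaussianReal 0 N.toNNReal)).map (fun p => (p.1, p.1 + p.2))

/-- Output law: the law of `X + Z` where `X ~ P` and `Z ~ N(0,N)` independent. -/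
noncomputable def outputLaw (N : ℝ) (P : Measure ℝ) : Measure ℝ :=
  (P.prod (gaussianReal 0 N.toNNReal)).map (fun p => p.1 + p.2)

/-- Mutual information of the AWGN channel with input law `P`:
`D(J ‖ P ⊗ Q_P)` where `J` is the joint input–output law and `Q_P` the output law. -/
noncomputable def mutualInfo (N : ℝ) (P : Measure ℝ) : EReal :=
  klDiv (jointLaw N P) (P.prod (outputLaw N P))

open scoped ENNReal NNReal

section KullbackLeibler

variable {α β : Type*} [MeasurableSpace α] [MeasurableSpace β]

lemma klDiv_eq_coe_informationTheory_klDiv {μ ν : Measure α} [IsFiniteMeasure μ]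
    [IsFiniteMeasure ν] (h_univ : μ Set.univ = ν Set.univ) :
    klDiv μ ν = (InformationTheory.klDiv μ ν : EReal) := by
  rw [klDiv]
  split_ifs with h
  · rw [← InformationTheory.toReal_klDiv_of_measure_eq h.1 h_univ]
    exact EReal.coe_ennreal_toReal (InformationTheory.klDiv_ne_top h.1 h.2)
  · rw [not_ne_iff.mp (mt InformationTheory.klDiv_ne_top_iff.mp h), EReal.coe_ennreal_top]

lemma klDiv_nonneg (μ ν : Measure α) [IsProbabilityMeasure μ] [IsProbabilityMeasure ν] :
    0 ≤ klDiv μ ν := by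
  rw [klDiv_eq_coe_informationTheory_klDiv (by simp)]
  exact EReal.coe_ennreal_nonneg _

lemma klDiv_self (μ : Measure α) [IsFiniteMeasure μ] : klDiv μ μ = 0 := by
  rw [klDiv_eq_coe_informationTheory_klDiv rfl, InformationTheory.klDiv_self,
    EReal.coe_ennreal_zero]

lemma llr_withDensity_self (μ : Measure α) [SigmaFinite μ] {f : α → ℝ≥0∞} (hf : Measurable f) :
    llr (μ.withDensity f) μ =ᵐ[μ] fun x ↦ log (f x).toReal := by
  filter_upwards [Measure.rnDeriv_withDensity μ hf] with x hx
  rw [llr, hx]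

lemma klDiv_withDensity_self (μ : Measure α) [SigmaFinite μ] {f : α → ℝ≥0∞} (hf : Measurable f)
    (h_int : Integrable (fun x ↦ log (f x).toReal) (μ.withDensity f)) :
    klDiv (μ.withDensity f) μ = (∫ x, log (f x).toReal ∂μ.withDensity f : ℝ) := by
  have h_ac : μ.withDensity f ≪ μ := withDensity_absolutelyContinuous μ f
  have h_llr := h_ac.ae_le (llr_withDensity_self μ hf)
  rw [klDiv, if_pos ⟨h_ac, (integrable_congr h_llr).mpr h_int⟩, integral_congr_ae h_llr]

lemma informationTheory_klDiv_map_measurableEquiv (μ ν : Measure α) [IsFiniteMeasure μ]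
    [IsFiniteMeasure ν] (e : α ≃ᵐ β) :
    InformationTheory.klDiv (μ.map e) (ν.map e) = InformationTheory.klDiv μ ν := by
  refine le_antisymm (InformationTheory.klDiv_map_le μ ν e.measurable) ?_
  simpa only [MeasurableEquiv.map_symm_map] using
    InformationTheory.klDiv_map_le (μ.map e) (ν.map e) e.symm.measurable

lemma informationTheory_klDiv_prod_eq_add [StandardBorelSpace α] [Nonempty α]
    (ρ : Measure (α × β)) [IsFiniteMeasure ρ] (μ : Measure α) [IsProbabilityMeasure μ]
    (ν : Measure β) [IsFiniteMeasure ν] :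
    InformationTheory.klDiv ρ (μ.prod ν) =
      InformationTheory.klDiv ρ (μ.prod ρ.snd) + InformationTheory.klDiv ρ.snd ν := by
  let ρ' := ρ.map MeasurableEquiv.prodComm
  have h_fst : ρ'.fst = ρ.snd := Measure.fst_map_swap
  have h_disintegrate : ρ.snd ⊗ₘ ρ'.condKernel = ρ' := by
    rw [← h_fst]; exact ρ'.disintegrate ρ'.condKernel
  have h_swap (ξ : Measure β) [IsFiniteMeasure ξ] :
      InformationTheory.klDiv ρ (μ.prod ξ) =
        InformationTheory.klDiv ρ' (ξ ⊗ₘ Kernel.const β μ) := by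
    rw [← informationTheory_klDiv_map_measurableEquiv ρ _ MeasurableEquiv.prodComm,
      Measure.compProd_const]
    congr 1
    exact Measure.prod_swap
  rw [h_swap, h_swap, ← h_disintegrate, InformationTheory.klDiv_compProd_eq_add, add_comm]

lemma klDiv_prod_eq_add [StandardBorelSpace α] [Nonempty α]
    (ρ : Measure (α × β)) [IsProbabilityMeasure ρ] (μ : Measure α) [IsProbabilityMeasure μ]
    (ν : Measure β) [IsProbabilityMeasure ν] :
    klDiv ρ (μ.prod ν) = klDiv ρ (μ.prod ρ.snd) + klDiv ρ.snd ν := by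
  simp only [klDiv_eq_coe_informationTheory_klDiv, measure_univ]
  rw [informationTheory_klDiv_prod_eq_add, EReal.coe_ennreal_add]

end KullbackLeibler

section Gaussian

lemma log_gaussianPDFReal (m : ℝ) {v : ℝ≥0} (hv : v ≠ 0) (x : ℝ) :
    log (gaussianPDFReal m v x) = -(log (2 * π * v) / 2) - (x - m) ^ 2 / (2 * v) := by
  rw [gaussianPDFReal, log_mul (by positivity) (exp_ne_zero _), log_inv, log_sqrt (by positivity),
    log_exp]
  ring

/-- The Radon–Nikodym density of `N(m₁, v₁)` with respect to `N(m₂, v₂)`, for nonzero variances. -/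
noncomputable def gaussianRatio (m₁ : ℝ) (v₁ : ℝ≥0) (m₂ : ℝ) (v₂ : ℝ≥0) (x : ℝ) : ℝ≥0∞ :=
  gaussianPDF m₁ v₁ x / gaussianPDF m₂ v₂ x

@[fun_prop]
lemma measurable_gaussianRatio (v₁ : ℝ≥0) (m₂ : ℝ) (v₂ : ℝ≥0) :
    Measurable fun p : ℝ × ℝ ↦ gaussianRatio p.1 v₁ m₂ v₂ p.2 := by
  unfold gaussianRatio
  fun_prop

lemma gaussianReal_eq_withDensity_gaussianRatio (m₁ m₂ : ℝ) {v₁ v₂ : ℝ≥0} (hv₁ : v₁ ≠ 0)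
    (hv₂ : v₂ ≠ 0) :
    gaussianReal m₁ v₁ = (gaussianReal m₂ v₂).withDensity (gaussianRatio m₁ v₁ m₂ v₂) := by
  have h_pdf : gaussianPDF m₁ v₁ = gaussianPDF m₂ v₂ * gaussianRatio m₁ v₁ m₂ v₂ := by
    ext x
    exact (ENNReal.mul_div_cancel (gaussianPDF_pos m₂ hv₂ x).ne' gaussianPDF_ne_top).symm
  rw [gaussianReal_of_var_ne_zero _ hv₁, gaussianReal_of_var_ne_zero _ hv₂, h_pdf,
    withDensity_mul _ (by fun_prop) (by unfold gaussianRatio; fun_prop)]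

lemma log_gaussianRatio (m₁ m₂ : ℝ) {v₁ v₂ : ℝ≥0} (hv₁ : v₁ ≠ 0) (hv₂ : v₂ ≠ 0) (x : ℝ) :
    log (gaussianRatio m₁ v₁ m₂ v₂ x).toReal =
      log (v₂ / v₁) / 2 + (x - m₂) ^ 2 / (2 * v₂) - (x - m₁) ^ 2 / (2 * v₁) := by
  rw [gaussianRatio, ENNReal.toReal_div, toReal_gaussianPDF, toReal_gaussianPDF,
    log_div (gaussianPDFReal_pos _ _ _ hv₁).ne' (gaussianPDFReal_pos _ _ _ hv₂).ne',
    log_gaussianPDFReal _ hv₁, log_gaussianPDFReal _ hv₂,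
    log_mul (x := 2 * π) (y := v₁) (by positivity) (by positivity),
    log_mul (x := 2 * π) (y := v₂) (by positivity) (by positivity),
    log_div (by positivity) (by positivity)]
  ring

/-- The additive Gaussian noise channel: the law of the output given the input `x` is `N(x, v)`. -/
noncomputable def gaussianChannel (v : ℝ≥0) : Kernel ℝ ℝ where
  toFun x := gaussianReal x v
  measurable' := measurable_gaussianReal.comp (measurable_id.prodMk measurable_const)

instance (v : ℝ≥0) : IsMarkovKernel (gaussianChannel v) where
  isProbabilityMeasure x := instIsProbabilityMeasureGaussianReal x v

lemma gaussianChannel_eq_withDensity (m : ℝ) {v w : ℝ≥0} (hv : v ≠ 0) (hw : w ≠ 0) :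
    gaussianChannel v = (Kernel.const ℝ (gaussianReal m w)).withDensity
      fun x ↦ gaussianRatio x v m w := by
  ext1 x
  rw [Kernel.withDensity_apply _ (by fun_prop), Kernel.const_apply]
  exact gaussianReal_eq_withDensity_gaussianRatio x m hv hw

end Gaussian

section Laws

variable (N : ℝ) (P : Measure ℝ)

lemma snd_jointLaw : (jointLaw N P).snd = outputLaw N P := by
  rw [jointLaw, outputLaw, Measure.snd, Measure.map_map (by fun_prop) (by fun_prop)]
  rfl

lemma outputLaw_gaussianReal (m : ℝ) (v : ℝ≥0) :
    outputLaw N (gaussianReal m v) = gaussianReal m (v + N.toNNReal) := by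
  simpa only [outputLaw, Measure.conv, add_zero] using
    gaussianReal_conv_gaussianReal (m₁ := m) (m₂ := 0) (v₁ := v) (v₂ := N.toNNReal)

variable [IsProbabilityMeasure P]

instance : IsProbabilityMeasure (jointLaw N P) :=
  Measure.isProbabilityMeasure_map (by fun_prop)

instance : IsProbabilityMeasure (outputLaw N P) :=
  Measure.isProbabilityMeasure_map (by fun_prop)

lemma jointLaw_eq_compProd : jointLaw N P = P ⊗ₘ gaussianChannel N.toNNReal := by
  have h_shear : Measurable fun p : ℝ × ℝ ↦ (p.1, p.1 + p.2) := by fun_prop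
  ext s hs
  rw [jointLaw, Measure.map_apply h_shear hs, Measure.prod_apply (h_shear hs),
    Measure.compProd_apply hs]
  congr 1 with x
  have h_translate : gaussianChannel N.toNNReal x =
      (gaussianReal 0 N.toNNReal).map (x + ·) := by
    rw [gaussianReal_map_const_add, zero_add]; rfl
  rw [h_translate, Measure.map_apply (by fun_prop) (measurable_prodMk_left hs)]
  rfl

lemma jointLaw_eq_withDensity {N : ℝ} (hN : 0 < N) (m : ℝ) {w : ℝ≥0} (hw : w ≠ 0) :
    jointLaw N P = (P.prod (gaussianReal m w)).withDensity
      fun p ↦ gaussianRatio p.1 N.toNNReal m w p.2 := by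
  have h_channel := gaussianChannel_eq_withDensity m (Real.toNNReal_pos.mpr hN).ne' hw
  have : IsSFiniteKernel ((Kernel.const ℝ (gaussianReal m w)).withDensity
      fun x ↦ gaussianRatio x N.toNNReal m w) := h_channel ▸ inferInstance
  rw [jointLaw_eq_compProd, h_channel, Measure.compProd_withDensity (by fun_prop),
    Measure.compProd_const]

lemma map_sub_jointLaw :
    (jointLaw N P).map (fun p ↦ p.2 - p.1) = gaussianReal 0 N.toNNReal := by
  have h_noise : (fun p : ℝ × ℝ ↦ p.2 - p.1) ∘ (fun p ↦ (p.1, p.1 + p.2)) = Prod.snd := by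
    ext p; simp
  rw [jointLaw, Measure.map_map (by fun_prop) (by fun_prop), h_noise]
  exact measurePreserving_snd.map_eq

end Laws

section Moments

variable {P : Measure ℝ} [IsProbabilityMeasure P]

lemma memLp_id_outputLaw (N : ℝ) {p : ℝ≥0∞} (hp : p ≠ ∞) (hP : MemLp id p P) :
    MemLp id p (outputLaw N P) := by
  rw [outputLaw, memLp_map_measure_iff (by fun_prop) (by fun_prop)]
  exact (hP.comp_fst _).add ((memLp_id_gaussianReal' p hp).comp_snd P)

lemma integral_id_outputLaw (N : ℝ) (hP : Integrable (fun x ↦ x) P) :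
    ∫ y, y ∂outputLaw N P = ∫ x, x ∂P := by
  have h_noise : Integrable (fun z ↦ z) (gaussianReal 0 N.toNNReal) :=
    memLp_one_iff_integrable.mp (memLp_id_gaussianReal 1)
  rw [outputLaw, integral_map (by fun_prop) (by fun_prop),
    integral_add (hP.comp_fst _) (h_noise.comp_snd P), integral_fun_fst (fun x : ℝ ↦ x),
    integral_fun_snd (fun z : ℝ ↦ z), integral_id_gaussianReal]
  simp

lemma variance_id_outputLaw {N : ℝ} (hN : 0 ≤ N) (hP : MemLp id 2 P) :
    Var[id; outputLaw N P] = Var[id; P] + N := by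
  have h_add := variance_add_prod hP (memLp_id_gaussianReal (μ := 0) (v := N.toNNReal) 2)
  rw [variance_id_gaussianReal, Real.coe_toNNReal N hN] at h_add
  rw [outputLaw, variance_id_map (by fun_prop), ← h_add]
  rfl

lemma integrable_sq_output_sub_jointLaw (N : ℝ) (hP : MemLp id 2 P) (c : ℝ) :
    Integrable (fun p ↦ (p.2 - c) ^ 2) (jointLaw N P) := by
  have h := ((memLp_id_outputLaw N (by norm_num) hP).sub (memLp_const c)).integrable_sq
  rw [← snd_jointLaw, Measure.snd] at h
  exact h.comp_measurable measurable_snd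

lemma integral_sq_output_sub_mean_jointLaw {N : ℝ} (hN : 0 ≤ N) (hP : MemLp id 2 P) :
    ∫ p, (p.2 - ∫ x, x ∂P) ^ 2 ∂jointLaw N P = Var[id; P] + N := by
  rw [← variance_id_outputLaw hN hP, variance_eq_integral (by fun_prop)]
  simp only [id_eq]
  rw [integral_id_outputLaw N (hP.integrable (by norm_num)), ← snd_jointLaw, Measure.snd,
    integral_map (by fun_prop) (by fun_prop)]

lemma integrable_sq_noise_jointLaw (N : ℝ) (P : Measure ℝ) [IsProbabilityMeasure P] :
    Integrable (fun p ↦ (p.2 - p.1) ^ 2) (jointLaw N P) := by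
  have h := (memLp_id_gaussianReal (μ := 0) (v := N.toNNReal) 2).integrable_sq
  rw [← map_sub_jointLaw N P] at h
  exact h.comp_measurable (by fun_prop)

lemma integral_sq_noise_jointLaw {N : ℝ} (hN : 0 ≤ N) (P : Measure ℝ) [IsProbabilityMeasure P] :
    ∫ p, (p.2 - p.1) ^ 2 ∂jointLaw N P = N := by
  have h_var := variance_fun_id_gaussianReal (μ := 0) (v := N.toNNReal)
  rw [variance_of_integral_eq_zero (by fun_prop) integral_id_gaussianReal,
    Real.coe_toNNReal N hN, ← map_sub_jointLaw N P,
    integral_map (by fun_prop) (by fun_prop)] at h_var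
  exact h_var

lemma memLp_id_two_of_lintegral_sq_le {μ : Measure ℝ} {Γ : ℝ}
    (h : ∫⁻ t, ENNReal.ofReal (t ^ 2) ∂μ ≤ ENNReal.ofReal Γ) : MemLp id 2 μ := by
  refine (memLp_two_iff_integrable_sq (by fun_prop)).mpr ⟨by fun_prop, ?_⟩
  change HasFiniteIntegral (fun t : ℝ ↦ t ^ 2) μ
  rw [hasFiniteIntegral_iff_ofReal (.of_forall fun t ↦ sq_nonneg t)]
  exact h.trans_lt ENNReal.ofReal_lt_top

lemma variance_id_le_of_lintegral_sq_le {Γ : ℝ} (hΓ : 0 ≤ Γ)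
    (h : ∫⁻ t, ENNReal.ofReal (t ^ 2) ∂P ≤ ENNReal.ofReal Γ) : Var[id; P] ≤ Γ := by
  refine (variance_le_expectation_sq (by fun_prop)).trans ?_
  change ∫ t, t ^ 2 ∂P ≤ Γ
  rw [integral_eq_lintegral_of_nonneg_ae (.of_forall fun t ↦ sq_nonneg _) (by fun_prop)]
  exact ENNReal.toReal_le_of_le_ofReal hΓ h

lemma lintegral_sq_gaussianReal (v : ℝ≥0) :
    ∫⁻ t, ENNReal.ofReal (t ^ 2) ∂gaussianReal 0 v = v := by
  have h_var := variance_fun_id_gaussianReal (μ := 0) (v := v)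
  rw [variance_of_integral_eq_zero (by fun_prop) integral_id_gaussianReal] at h_var
  have h_int : Integrable (fun t : ℝ ↦ t ^ 2) (gaussianReal 0 v) :=
    (memLp_id_gaussianReal 2).integrable_sq
  rw [← ofReal_integral_eq_lintegral_ofReal h_int (.of_forall fun t ↦ sq_nonneg t), h_var,
    ENNReal.ofReal_coe_nnreal]

end Moments

section MutualInformation

variable {N : ℝ} {P : Measure ℝ} [IsProbabilityMeasure P]

lemma klDiv_jointLaw_prod_gaussianReal (hN : 0 < N) (hP : MemLp id 2 P) {w : ℝ≥0} (hw : w ≠ 0) :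
    klDiv (jointLaw N P) (P.prod (gaussianReal (∫ x, x ∂P) w)) =
      (log (w / N) / 2 + (Var[id; P] + N) / (2 * w) - 1 / 2 : ℝ) := by
  let ratio (p : ℝ × ℝ) : ℝ≥0∞ := gaussianRatio p.1 N.toNNReal (∫ x, x ∂P) w p.2
  have h_joint : jointLaw N P = (P.prod (gaussianReal (∫ x, x ∂P) w)).withDensity ratio :=
    jointLaw_eq_withDensity P hN _ hw
  have h_log : (fun p ↦ log (ratio p).toReal) = fun p ↦
      log (w / N) / 2 + (p.2 - ∫ x, x ∂P) ^ 2 / (2 * w) - (p.2 - p.1) ^ 2 / (2 * N) := by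
    ext p
    rw [log_gaussianRatio _ _ (Real.toNNReal_pos.mpr hN).ne' hw, Real.coe_toNNReal N hN.le]
  have h_sq := (integrable_sq_output_sub_jointLaw N hP (∫ x, x ∂P)).div_const (2 * w)
  have h_output : Integrable (fun p : ℝ × ℝ ↦ log (w / N) / 2 +
      (p.2 - ∫ x, x ∂P) ^ 2 / (2 * w)) (jointLaw N P) := (integrable_const _).add h_sq
  have h_noise := (integrable_sq_noise_jointLaw N P).div_const (2 * N)
  have h_int : Integrable (fun p ↦ log (ratio p).toReal) (jointLaw N P) :=
    h_log ▸ h_output.sub h_noise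
  calc klDiv (jointLaw N P) (P.prod (gaussianReal (∫ x, x ∂P) w))
      = (∫ p, log (ratio p).toReal ∂jointLaw N P : ℝ) := by
        rw [h_joint] at h_int ⊢
        exact klDiv_withDensity_self _ (measurable_gaussianRatio _ _ _) h_int
    _ = (log (w / N) / 2 + (Var[id; P] + N) / (2 * w) - 1 / 2 : ℝ) := by
        rw [h_log, integral_sub h_output h_noise, integral_add (integrable_const _) h_sq,
          integral_const, integral_div, integral_div,
          integral_sq_output_sub_mean_jointLaw hN.le hP, integral_sq_noise_jointLaw hN.le,
          probReal_univ, one_smul, div_mul_cancel_right₀ hN.ne', one_div]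

theorem mutualInfo_add_klDiv_outputLaw (hN : 0 < N) (hP : MemLp id 2 P) :
    mutualInfo N P +
        klDiv (outputLaw N P) (gaussianReal (∫ x, x ∂P) (Var[id; P] + N).toNNReal) =
      (1 / 2 * log (1 + Var[id; P] / N) : ℝ) := by
  have hw : 0 < Var[id; P] + N := add_pos_of_nonneg_of_pos (variance_nonneg _ _) hN
  rw [mutualInfo, ← snd_jointLaw, ← klDiv_prod_eq_add,
    klDiv_jointLaw_prod_gaussianReal hN hP (Real.toNNReal_pos.mpr hw).ne',
    Real.coe_toNNReal _ hw.le]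
  congr 1
  rw [one_add_div hN.ne', add_comm N]
  field_simp
  ring

theorem mutualInfo_le_of_memLp (hN : 0 < N) (hP : MemLp id 2 P) :
    mutualInfo N P ≤ (1 / 2 * log (1 + Var[id; P] / N) : ℝ) := by
  rw [← mutualInfo_add_klDiv_outputLaw hN hP]
  exact le_add_of_nonneg_right (klDiv_nonneg _ _)

theorem mutualInfo_gaussianReal (hN : 0 < N) (m : ℝ) (v : ℝ≥0) :
    mutualInfo N (gaussianReal m v) = (1 / 2 * log (1 + v / N) : ℝ) := by
  have h := mutualInfo_add_klDiv_outputLaw hN (memLp_id_gaussianReal (μ := m) (v := v) 2)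
  rwa [integral_id_gaussianReal, variance_id_gaussianReal, outputLaw_gaussianReal,
    Real.toNNReal_add v.coe_nonneg hN.le, Real.toNNReal_coe, klDiv_self, add_zero] at h

theorem mutualInfo_le_of_lintegral_sq_le {Γ : ℝ} (hN : 0 < N) (hΓ : 0 ≤ Γ)
    (h : ∫⁻ t, ENNReal.ofReal (t ^ 2) ∂P ≤ ENNReal.ofReal Γ) :
    mutualInfo N P ≤ (1 / 2 * log (1 + Γ / N) : ℝ) := by
  refine (mutualInfo_le_of_memLp hN (memLp_id_two_of_lintegral_sq_le h)).trans ?_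
  have h_var : Var[id; P] ≤ Γ := variance_id_le_of_lintegral_sq_le hΓ h
  have h_nonneg : 0 ≤ Var[id; P] := variance_nonneg _ _
  rw [EReal.coe_le_coe_iff]
  gcongr

end MutualInformation

/-- over input laws `P` with `∫ x² dP ≤ Γ`, the AWGN mutual information
attains its supremum, which equals `½ log(1 + Γ/N)`; it is attained by `P = N(0,Γ)`,
in which case the output law is `N(0, Γ+N)`. -/
theorem awgn_capacity_cost (N Γ : ℝ) (hN : 0 < N) (hΓ : 0 < Γ) :
    IsGreatest {x : EReal | ∃ P : Measure ℝ, IsProbabilityMeasure P ∧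
        (∫⁻ t, ENNReal.ofReal (t^2) ∂P) ≤ ENNReal.ofReal Γ ∧ mutualInfo N P = x}
      (((1/2) * Real.log (1 + Γ/N) : ℝ) : EReal)
    ∧ mutualInfo N (gaussianReal 0 Γ.toNNReal)
        = (((1/2) * Real.log (1 + Γ/N) : ℝ) : EReal)
    ∧ outputLaw N (gaussianReal 0 Γ.toNNReal) = gaussianReal 0 (Γ + N).toNNReal := by
  have h_gaussian : mutualInfo N (gaussianReal 0 Γ.toNNReal) =
      ((1 / 2 * Real.log (1 + Γ / N) : ℝ) : EReal) := by
    rw [mutualInfo_gaussianReal hN, Real.coe_toNNReal Γ hΓ.le]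
  refine ⟨⟨⟨gaussianReal 0 Γ.toNNReal, inferInstance, ?_, h_gaussian⟩, ?_⟩, h_gaussian, ?_⟩
  · exact (lintegral_sq_gaussianReal Γ.toNNReal).le
  · rintro _ ⟨P, _, h_power, rfl⟩
    exact mutualInfo_le_of_lintegral_sq_le hN hΓ.le h_power
  · rw [outputLaw_gaussianReal, Real.toNNReal_add hΓ.le hN.le]
end

section
/- Fix N > 0, Γ > 0, n ≥ 1, and x = (x₁,…,xₙ) ∈ ℝⁿ. Let Y₁,…,Yₙ be independent with Yᵢ ~ N(xᵢ, N). Then Var( Σᵢ₌₁ⁿ log(W(Yᵢ|xᵢ)/Q*(Yᵢ)) ) = (nΓ² + 2N‖x‖²) / (2(Γ+N)²). -/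
/-!
Up to an additive constant, `log (W N x y / Qstar N Γ y)` is the quadratic polynomial
`a y² + b y` with `a = 1 / (2 (Γ + N)) - 1 / (2 N)` and `b = x / N`. For `Y ~ N(μ, v)` bilinearity
of the covariance reduces `Var (a Y² + b Y)` to moments of order at most four, which follow from the
recursion `E[Yᵏ⁺²] = μ E[Yᵏ⁺¹] + (k + 1) v E[Yᵏ]`: differentiate the identity `M' = (μ + v t) M`
satisfied by the moment generating function `k + 1` times at `0`. The result is
`2 a² v² + (2 a μ + b)² v`, and variances add up over independent coordinates.
-/

open Real MeasureTheory ProbabilityTheory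

/-- The AWGN transition density `W(y|x)` with noise variance `N`. -/
noncomputable def W (N x y : ℝ) : ℝ :=
  (2 * π * N) ^ (-(1:ℝ)/2) * Real.exp (-(y - x)^2 / (2 * N))

/-- The capacity-achieving output density `Q*(y) = N(0, Γ+N)` density. -/
noncomputable def Qstar (N Γ y : ℝ) : ℝ :=
  (2 * π * (Γ + N)) ^ (-(1:ℝ)/2) * Real.exp (-y^2 / (2 * (Γ + N)))

open scoped NNReal

section GaussianMoments

lemma iteratedDeriv_succ_id_mul_zero {𝕜 : Type*} [NontriviallyNormedField 𝕜] {f : 𝕜 → 𝕜} {k : ℕ}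
    (hf : ContDiffAt 𝕜 (k + 1) f 0) :
    iteratedDeriv (k + 1) (fun t ↦ t * f t) 0 = (k + 1) * iteratedDeriv k f 0 := by
  rw [iteratedDeriv_fun_mul (by fun_prop) (mod_cast hf)]
  simp [iteratedDeriv_fun_id_zero]

lemma deriv_exp_linear_add_quadratic (a b : ℝ) :
    deriv (fun t ↦ rexp (a * t + b * t ^ 2 / 2)) =
      fun t ↦ a * rexp (a * t + b * t ^ 2 / 2) + b * (t * rexp (a * t + b * t ^ 2 / 2)) := by
  ext t
  have h_exponent : HasDerivAt (fun t ↦ a * t + b * t ^ 2 / 2) (a + b * t) t := by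
    refine (((hasDerivAt_id t).const_mul a).add
      ((((hasDerivAt_id t).pow 2).const_mul b).div_const 2)).congr_deriv ?_
    simp only [id_eq, Nat.cast_ofNat, Nat.add_one_sub_one, pow_one, mul_one]
    ring
  rw [h_exponent.exp.deriv]
  ring

variable (μ : ℝ) (v : ℝ≥0)

lemma integral_pow_gaussianReal_eq_iteratedDeriv (k : ℕ) :
    ∫ y, y ^ k ∂gaussianReal μ v = iteratedDeriv k (fun t ↦ rexp (μ * t + v * t ^ 2 / 2)) 0 := by
  rw [← mgf_fun_id_gaussianReal, iteratedDeriv_mgf_zero (by simp)]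
  rfl

lemma integral_pow_add_two_gaussianReal (k : ℕ) :
    ∫ y, y ^ (k + 2) ∂gaussianReal μ v =
      μ * ∫ y, y ^ (k + 1) ∂gaussianReal μ v + (k + 1) * v * ∫ y, y ^ k ∂gaussianReal μ v := by
  simp only [integral_pow_gaussianReal_eq_iteratedDeriv]
  rw [iteratedDeriv_succ', deriv_exp_linear_add_quadratic,
    iteratedDeriv_fun_add (by fun_prop) (by fun_prop),
    iteratedDeriv_const_mul _ (by fun_prop), iteratedDeriv_const_mul _ (by fun_prop),
    iteratedDeriv_succ_id_mul_zero (by fun_prop)]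
  ring

lemma integral_sq_gaussianReal : ∫ y, y ^ 2 ∂gaussianReal μ v = μ ^ 2 + v := by
  rw [integral_pow_add_two_gaussianReal μ v 0]
  simp only [zero_add, pow_zero, pow_one, integral_id_gaussianReal, integral_const, probReal_univ,
    smul_eq_mul, Nat.cast_zero]
  ring

lemma integral_pow_three_gaussianReal :
    ∫ y, y ^ 3 ∂gaussianReal μ v = μ ^ 3 + 3 * μ * v := by
  rw [integral_pow_add_two_gaussianReal μ v 1]
  simp only [Nat.reduceAdd, Nat.cast_one, pow_one, integral_sq_gaussianReal,
    integral_id_gaussianReal]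
  ring

lemma integral_pow_four_gaussianReal :
    ∫ y, y ^ 4 ∂gaussianReal μ v = μ ^ 4 + 6 * μ ^ 2 * v + 3 * v ^ 2 := by
  rw [integral_pow_add_two_gaussianReal μ v 2]
  simp only [Nat.reduceAdd, Nat.cast_ofNat, integral_sq_gaussianReal,
    integral_pow_three_gaussianReal]
  ring

end GaussianMoments

section GaussianQuadratic

variable (μ : ℝ) (v : ℝ≥0)

lemma memLp_two_pow_gaussianReal (k : ℕ) : MemLp (fun y ↦ y ^ k) 2 (gaussianReal μ v) := by
  rw [memLp_two_iff_integrable_sq (by fun_prop)]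
  simp only [← pow_mul]
  exact integrable_pow_of_mem_interior_integrableExpSet (X := fun y ↦ y) (by simp) (k * 2)

lemma memLp_two_id_gaussianReal : MemLp (fun y ↦ y) 2 (gaussianReal μ v) :=
  memLp_id_gaussianReal 2

lemma variance_sq_gaussianReal :
    Var[fun y ↦ y ^ 2; gaussianReal μ v] = 2 * v ^ 2 + 4 * μ ^ 2 * v := by
  rw [variance_eq_sub (memLp_two_pow_gaussianReal μ v 2)]
  simp only [Pi.pow_apply, ← pow_mul]
  rw [integral_pow_four_gaussianReal, integral_sq_gaussianReal]
  ring

lemma covariance_sq_id_gaussianReal :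
    cov[fun y ↦ y ^ 2, fun y ↦ y; gaussianReal μ v] = 2 * μ * v := by
  rw [covariance_eq_sub (memLp_two_pow_gaussianReal μ v 2) (memLp_two_id_gaussianReal μ v)]
  simp only [Pi.mul_apply, ← pow_succ]
  rw [integral_pow_three_gaussianReal, integral_sq_gaussianReal, integral_id_gaussianReal]
  ring

lemma memLp_two_quadratic_gaussianReal (a b c : ℝ) :
    MemLp (fun y ↦ a * y ^ 2 + b * y + c) 2 (gaussianReal μ v) :=
  (((memLp_two_pow_gaussianReal μ v 2).const_mul a).add
    ((memLp_two_id_gaussianReal μ v).const_mul b)).add (memLp_const c)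

lemma variance_quadratic_gaussianReal (a b c : ℝ) :
    Var[fun y ↦ a * y ^ 2 + b * y + c; gaussianReal μ v] =
      2 * a ^ 2 * v ^ 2 + (2 * a * μ + b) ^ 2 * v := by
  rw [variance_add_const (by fun_prop),
    variance_fun_add ((memLp_two_pow_gaussianReal μ v 2).const_mul a)
      ((memLp_two_id_gaussianReal μ v).const_mul b),
    variance_const_mul, variance_const_mul, covariance_const_mul_left, covariance_const_mul_right,
    variance_sq_gaussianReal, covariance_sq_id_gaussianReal, variance_fun_id_gaussianReal]
  ring

end GaussianQuadratic

section InformationDensity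

/-- The information density `log (W(y|x) / Q*(y))` of the AWGN channel at input `x` and output `y`,
taken relative to the reference output density `Q*`. -/
noncomputable def informationDensity (N Γ x y : ℝ) : ℝ :=
  Real.log (W N x y / Qstar N Γ y)

lemma Qstar_eq_W (N Γ y : ℝ) : Qstar N Γ y = W (Γ + N) 0 y := by
  simp [Qstar, W]

variable {N Γ : ℝ}

lemma W_pos (hN : 0 < N) (x y : ℝ) : 0 < W N x y := by
  unfold W
  positivity

lemma log_W (hN : 0 < N) (x y : ℝ) :
    Real.log (W N x y) = -Real.log (2 * π * N) / 2 - (y - x) ^ 2 / (2 * N) := by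
  unfold W
  rw [Real.log_mul (by positivity) (by positivity), Real.log_rpow (by positivity), Real.log_exp]
  ring

lemma informationDensity_eq_quadratic (hN : 0 < N) (hΓN : 0 < Γ + N) (x y : ℝ) :
    informationDensity N Γ x y =
      (1 / (2 * (Γ + N)) - 1 / (2 * N)) * y ^ 2 + x / N * y +
        (Real.log (2 * π * (Γ + N)) / 2 - Real.log (2 * π * N) / 2 - x ^ 2 / (2 * N)) := by
  rw [informationDensity, Qstar_eq_W, Real.log_div (W_pos hN x y).ne' (W_pos hΓN 0 y).ne',
    log_W hN, log_W hΓN]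
  ring

lemma memLp_two_informationDensity (hN : 0 < N) (hΓN : 0 < Γ + N) (x μ : ℝ) (v : ℝ≥0) :
    MemLp (informationDensity N Γ x) 2 (gaussianReal μ v) := by
  rw [funext (informationDensity_eq_quadratic hN hΓN x)]
  exact memLp_two_quadratic_gaussianReal ..

lemma variance_informationDensity (hN : 0 < N) (hΓN : 0 < Γ + N) (x : ℝ) :
    Var[informationDensity N Γ x; gaussianReal x N.toNNReal] =
      (Γ ^ 2 + 2 * N * x ^ 2) / (2 * (Γ + N) ^ 2) := by
  rw [funext (informationDensity_eq_quadratic hN hΓN x), variance_quadratic_gaussianReal,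
    Real.coe_toNNReal N hN.le]
  field_simp
  ring

end InformationDensity

theorem awgn_information_density_variance_sum_general {ι : Type*} [Fintype ι] {N Γ : ℝ}
    (hN : 0 < N) (hΓN : 0 < Γ + N) (x : ι → ℝ) :
    Var[fun y : ι → ℝ ↦ ∑ i, informationDensity N Γ (x i) (y i);
        Measure.pi fun i ↦ gaussianReal (x i) N.toNNReal] =
      (Fintype.card ι * Γ ^ 2 + 2 * N * ∑ i, x i ^ 2) / (2 * (Γ + N) ^ 2) := by
  calc Var[fun y : ι → ℝ ↦ ∑ i, informationDensity N Γ (x i) (y i);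
        Measure.pi fun i ↦ gaussianReal (x i) N.toNNReal]
      = ∑ i, Var[informationDensity N Γ (x i); gaussianReal (x i) N.toNNReal] := by
        simp only [← Finset.sum_fn]
        exact variance_sum_pi fun i ↦ memLp_two_informationDensity hN hΓN ..
    _ = ∑ i, (Γ ^ 2 + 2 * N * x i ^ 2) / (2 * (Γ + N) ^ 2) := by
        simp only [variance_informationDensity hN hΓN]
    _ = (Fintype.card ι * Γ ^ 2 + 2 * N * ∑ i, x i ^ 2) / (2 * (Γ + N) ^ 2) := by
        rw [← Finset.sum_div, Finset.sum_add_distrib, ← Finset.mul_sum]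
        simp

/-- For independent `Yᵢ ~ N(xᵢ, N)`,
`Var(Σᵢ log(W(Yᵢ|xᵢ)/Q*(Yᵢ))) = (nΓ² + 2N‖x‖²)/(2(Γ+N)²)`. -/
theorem awgn_information_density_variance_sum (N Γ : ℝ) (hN : 0 < N) (hΓ : 0 < Γ)
    (n : ℕ) (hn : 1 ≤ n) (x : Fin n → ℝ) :
    variance (fun y : Fin n → ℝ => ∑ i, Real.log (W N (x i) (y i) / Qstar N Γ (y i)))
        (Measure.pi fun i => gaussianReal (x i) N.toNNReal)
      = ((n : ℝ) * Γ^2 + 2 * N * ∑ i, (x i)^2) / (2 * (Γ + N)^2) := by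
  simpa only [informationDensity, Fintype.card_fin] using
    awgn_information_density_variance_sum_general hN (add_pos hΓ hN) x
end

section
/- Fix N > 0, n ≥ 2 and R > 0. Let X be uniformly distributed on the sphere {x ∈ ℝⁿ : ‖x‖ = R}, let Z ~ N(0, N·Iₙ) be independent of X, and let Q^cc denote the density of Y = X + Z, i.e. Q^cc(y) = ∫ (2πN)^{-n/2} exp(−‖y−x‖²/(2N)) dσ(x), σ being the uniform probability measure on the sphere. Then for every y ∈ ℝⁿ with y ≠ 0, Q^cc(y) = [Γ(n/2) / (√π · Γ((n−1)/2) · (2πN)^{n/2})] · exp(−(R² + ‖y‖²)/(2N)) · ∫_{−1}^{1} exp(R‖y‖t/N) (1−t²)^{(n−3)/2} dt, where Γ(·) is the Gamma function. (This is the closed form Q^cc(y) = [Γ(n/2)/(2(πN)^{n/2})] e^{−(R²+‖y‖²)/(2N)} (N/(R‖y‖))^{n/2−1} I_{n/2−1}(R‖y‖/N) with the modified Bessel function of the first kind I_ν replaced by its integral representation.) -/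
/-!
Since `‖y - x‖² = R² + ‖y‖² - 2⟪y, x⟫` on the sphere, only the law of `⟪y, X⟫` matters, and by
reflection invariance it depends on `y` only through `‖y‖`. Rotating in the plane of two orthonormal
vectors `e`, `f` expresses the mixed moments `∫ ⟪e, x⟫^(2 * m) ⟪f, x⟫²` through
`∫ ⟪e, x⟫^(2 * m + 2)`; summing over an orthonormal basis and using `‖x‖ = R` gives a two-step
recurrence for the moments of a coordinate. Integration by parts gives the same recurrence for the
probability density proportional to `(1 - t²)^((n - 3) / 2)` on `[-1, 1]`, and by Weierstrass
approximation a compactly supported measure is determined by its moments.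
-/

open Real MeasureTheory ProbabilityTheory

section SymmetricBeta

lemma beta_eq_integral {a b : ℝ} (ha : 0 < a) (hb : 0 < b) :
    beta a b = ∫ x in (0 : ℝ)..1, x ^ (a - 1) * (1 - x) ^ (b - 1) := by
  rw [beta_eq_betaIntegralReal a b ha hb, Complex.betaIntegral,
    ← Complex.ofReal_re (∫ x in (0 : ℝ)..1, _), ← intervalIntegral.integral_ofReal]
  congr 1
  refine intervalIntegral.integral_congr fun x hx ↦ ?_
  rw [Set.uIcc_of_le zero_le_one] at hx
  simp [Complex.ofReal_cpow hx.1, Complex.ofReal_cpow (sub_nonneg.2 hx.2)]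

lemma beta_self {v : ℝ} (hv : 0 < v) :
    beta v v = 2 ^ (1 - 2 * v) * (√π * Gamma v / Gamma (v + 1 / 2)) := by
  have hΓ : Gamma (v + 1 / 2) ≠ 0 := (Gamma_pos_of_pos (by positivity)).ne'
  have hΓ' : Gamma (2 * v) ≠ 0 := (Gamma_pos_of_pos (by positivity)).ne'
  rw [beta, ← two_mul, ← mul_div_assoc, div_eq_div_iff hΓ' hΓ]
  linear_combination Gamma v * Gamma_mul_Gamma_add_half v

lemma integral_one_sub_sq_rpow {v : ℝ} (hv : 0 < v) :
    ∫ t in (-1 : ℝ)..1, (1 - t ^ 2) ^ (v - 1) = √π * Gamma v / Gamma (v + 1 / 2) := by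
  have substitution : ∫ t in (-1 : ℝ)..1, (1 - t ^ 2) ^ (v - 1)
      = 2 * ∫ x in (0 : ℝ)..1, (1 - (2 * x - 1) ^ 2) ^ (v - 1) := by
    have := intervalIntegral.mul_integral_comp_mul_sub (a := 0) (b := 1) (c := 2) (d := 1)
      (f := fun t : ℝ ↦ (1 - t ^ 2) ^ (v - 1))
    norm_num at this ⊢
    exact this.symm
  have factorization : ∫ x in (0 : ℝ)..1, (1 - (2 * x - 1) ^ 2) ^ (v - 1)
      = 4 ^ (v - 1) * beta v v := by
    rw [beta_eq_integral hv hv, ← intervalIntegral.integral_const_mul]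
    refine intervalIntegral.integral_congr fun x hx ↦ ?_
    rw [Set.uIcc_of_le zero_le_one] at hx
    have hx' : 0 ≤ 1 - x := sub_nonneg.2 hx.2
    rw [← mul_rpow hx.1 hx', ← mul_rpow (by norm_num) (mul_nonneg hx.1 hx')]
    ring_nf
  have powers : (2 : ℝ) * 4 ^ (v - 1) * 2 ^ (1 - 2 * v) = 1 := by
    rw [show (4 : ℝ) = 2 ^ (2 : ℝ) by norm_num, ← rpow_mul zero_le_two, mul_assoc,
      ← rpow_add two_pos, show 2 * (v - 1) + (1 - 2 * v) = -1 by ring, rpow_neg_one]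
    norm_num
  rw [substitution, factorization, beta_self hv, ← mul_assoc, ← mul_assoc, powers, one_mul]

lemma intervalIntegrable_one_sub_sq_rpow {v : ℝ} (hv : 0 < v) :
    IntervalIntegrable (fun t : ℝ ↦ (1 - t ^ 2) ^ (v - 1)) volume (-1) 1 := by
  -- The integral of a non-integrable function is `0` by convention, but this one is positive.
  by_contra h
  have hpos : 0 < √π * Gamma v / Gamma (v + 1 / 2) := by
    have := Gamma_pos_of_pos hv
    have := Gamma_pos_of_pos (show 0 < v + 1 / 2 by positivity)
    positivity
  rw [← integral_one_sub_sq_rpow hv, intervalIntegral.integral_undef h] at hpos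
  exact hpos.false

lemma integral_pow_mul_one_sub_sq_rpow_recurrence {v : ℝ} (hv : 0 < v) (k : ℕ) :
    (k + 1) * ∫ t in (-1 : ℝ)..1, t ^ k * (1 - t ^ 2) ^ (v - 1)
      = (k + 1 + 2 * v) * ∫ t in (-1 : ℝ)..1, t ^ (k + 2) * (1 - t ^ 2) ^ (v - 1) := by
  have hint (j : ℕ) :
      IntervalIntegrable (fun t : ℝ ↦ t ^ j * (1 - t ^ 2) ^ (v - 1)) volume (-1) 1 :=
    (intervalIntegrable_one_sub_sq_rpow hv).continuousOn_mul (by fun_prop)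
  have hderiv (t : ℝ) (ht : t ∈ Set.Ioo (-1 : ℝ) 1) :
      HasDerivAt (fun t ↦ t ^ (k + 1) * (1 - t ^ 2) ^ v)
        ((k + 1) * (t ^ k * (1 - t ^ 2) ^ (v - 1))
          - (k + 1 + 2 * v) * (t ^ (k + 2) * (1 - t ^ 2) ^ (v - 1))) t := by
    have hpos : 0 < 1 - t ^ 2 := by nlinarith [ht.1, ht.2]
    have hsplit : (1 - t ^ 2) ^ v = (1 - t ^ 2) ^ (v - 1) * (1 - t ^ 2) := by
      rw [← rpow_add_one hpos.ne', sub_add_cancel]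
    refine ((hasDerivAt_pow (k + 1) t).mul
      (((hasDerivAt_pow 2 t).const_sub 1).rpow_const (p := v) (.inl hpos.ne'))).congr_deriv ?_
    rw [hsplit]
    push_cast
    ring
  have hFTC := intervalIntegral.integral_eq_sub_of_hasDerivAt_of_le (by norm_num)
    (.mul (by fun_prop) (.rpow_const (by fun_prop) fun _ _ ↦ .inr hv.le)) hderiv
    (((hint k).const_mul _).sub ((hint (k + 2)).const_mul _))
  rw [intervalIntegral.integral_sub ((hint k).const_mul _) ((hint (k + 2)).const_mul _),
    intervalIntegral.integral_const_mul, intervalIntegral.integral_const_mul] at hFTC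
  norm_num [zero_rpow hv.ne'] at hFTC
  exact sub_eq_zero.1 hFTC

/-- The symmetric beta distribution on `[-1, 1]` with shape parameter `v`, given by its density.
For `v = (n - 1) / 2` it is the law of a coordinate of a uniform point of the unit sphere
of `ℝⁿ`. -/
noncomputable def symmetricBeta (v : ℝ) : Measure ℝ :=
  (volume.restrict (Set.Ioc (-1) 1)).withDensity fun t ↦
    ENNReal.ofReal (Gamma (v + 1 / 2) / (√π * Gamma v) * (1 - t ^ 2) ^ (v - 1))

lemma ae_abs_le_one_symmetricBeta (v : ℝ) : ∀ᵐ t ∂symmetricBeta v, |t| ≤ 1 := by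
  refine (withDensity_absolutelyContinuous _ _).ae_le ?_
  filter_upwards [ae_restrict_mem measurableSet_Ioc] with t ht
  exact abs_le.2 ⟨ht.1.le, ht.2⟩

lemma ae_symmetricBeta_density_nonneg {v : ℝ} (hv : 0 < v) :
    ∀ᵐ t ∂volume.restrict (Set.Ioc (-1 : ℝ) 1),
      0 ≤ Gamma (v + 1 / 2) / (√π * Gamma v) * (1 - t ^ 2) ^ (v - 1) := by
  filter_upwards [ae_restrict_mem measurableSet_Ioc] with t ht
  have := Gamma_pos_of_pos hv
  have := Gamma_pos_of_pos (show 0 < v + 1 / 2 by positivity)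
  have : 0 ≤ 1 - t ^ 2 := by nlinarith [ht.1, ht.2]
  positivity

lemma integral_symmetricBeta {v : ℝ} (hv : 0 < v) (f : ℝ → ℝ) :
    ∫ t, f t ∂symmetricBeta v
      = Gamma (v + 1 / 2) / (√π * Gamma v)
        * ∫ t in (-1 : ℝ)..1, f t * (1 - t ^ 2) ^ (v - 1) := by
  rw [symmetricBeta, integral_withDensity_eq_integral_toReal_smul (by fun_prop) (by simp),
    intervalIntegral.integral_of_le (by norm_num), ← integral_const_mul]
  refine integral_congr_ae ?_
  filter_upwards [ae_symmetricBeta_density_nonneg hv] with t ht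
  rw [ENNReal.toReal_ofReal ht, smul_eq_mul]
  ring

lemma isProbabilityMeasure_symmetricBeta {v : ℝ} (hv : 0 < v) :
    IsProbabilityMeasure (symmetricBeta v) := by
  have hint : IntegrableOn (fun t : ℝ ↦ (1 - t ^ 2) ^ (v - 1)) (Set.Ioc (-1) 1) :=
    (intervalIntegrable_iff_integrableOn_Ioc_of_le (by norm_num)).1
      (intervalIntegrable_one_sub_sq_rpow hv)
  have hΓ : Gamma v ≠ 0 := (Gamma_pos_of_pos hv).ne'
  have : Gamma (v + 1 / 2) ≠ 0 := (Gamma_pos_of_pos (by positivity)).ne'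
  constructor
  rw [symmetricBeta, withDensity_apply _ .univ, Measure.restrict_univ,
    ← ofReal_integral_eq_lintegral_ofReal (hint.const_mul _) (ae_symmetricBeta_density_nonneg hv),
    integral_const_mul, ← intervalIntegral.integral_of_le (by norm_num),
    integral_one_sub_sq_rpow hv, ENNReal.ofReal_eq_one]
  field_simp

lemma moment_symmetricBeta_recurrence {v : ℝ} (hv : 0 < v) (k : ℕ) :
    (k + 1) * ∫ t, t ^ k ∂symmetricBeta v
      = (k + 1 + 2 * v) * ∫ t, t ^ (k + 2) ∂symmetricBeta v := by
  simp only [integral_symmetricBeta hv]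
  linear_combination Gamma (v + 1 / 2) / (√π * Gamma v)
    * integral_pow_mul_one_sub_sq_rpow_recurrence hv k

lemma odd_moment_symmetricBeta {v : ℝ} (hv : 0 < v) {k : ℕ} (hk : Odd k) :
    ∫ t, t ^ k ∂symmetricBeta v = 0 := by
  have hneg := intervalIntegral.integral_comp_neg (a := -1) (b := 1)
    (fun t : ℝ ↦ t ^ k * (1 - t ^ 2) ^ (v - 1))
  simp only [hk.neg_pow, neg_sq, neg_mul, intervalIntegral.integral_neg, neg_neg] at hneg
  rw [integral_symmetricBeta hv, self_eq_neg.1 hneg.symm, mul_zero]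

end SymmetricBeta

section Moments

variable {μ ν : Measure ℝ} [IsFiniteMeasure μ] [IsFiniteMeasure ν] {a b : ℝ}

lemma integrable_of_continuous_of_ae_mem_Icc (hμ : ∀ᵐ x ∂μ, x ∈ Set.Icc a b) {f : ℝ → ℝ}
    (hf : Continuous f) : Integrable f μ := by
  rw [← Measure.restrict_eq_self_of_ae_mem hμ]
  exact hf.integrableOn_Icc

lemma integral_polynomial_eq_of_moments_eq (hμ : ∀ᵐ x ∂μ, x ∈ Set.Icc a b)
    (hν : ∀ᵐ x ∂ν, x ∈ Set.Icc a b) (hmoments : ∀ k : ℕ, ∫ x, x ^ k ∂μ = ∫ x, x ^ k ∂ν)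
    (p : Polynomial ℝ) : ∫ x, p.eval x ∂μ = ∫ x, p.eval x ∂ν := by
  simp only [Polynomial.eval_eq_sum_range]
  rw [integral_finsetSum _ fun k _ ↦ integrable_of_continuous_of_ae_mem_Icc hμ (by fun_prop),
    integral_finsetSum _ fun k _ ↦ integrable_of_continuous_of_ae_mem_Icc hν (by fun_prop)]
  simp only [integral_const_mul, hmoments]

lemma measure_eq_of_moments_eq (hμ : ∀ᵐ x ∂μ, x ∈ Set.Icc a b)
    (hν : ∀ᵐ x ∂ν, x ∈ Set.Icc a b) (hmoments : ∀ k : ℕ, ∫ x, x ^ k ∂μ = ∫ x, x ^ k ∂ν) :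
    μ = ν := by
  refine ext_of_forall_integral_eq_of_IsFiniteMeasure fun f ↦ eq_of_forall_dist_le fun ε hε ↦ ?_
  set C := μ.real Set.univ + ν.real Set.univ + 1
  have hC : 0 < C := by positivity
  obtain ⟨p, hp⟩ := exists_polynomial_near_of_continuousOn a b f f.continuous.continuousOn
    (ε / C) (by positivity)
  have happrox (ρ : Measure ℝ) [IsFiniteMeasure ρ] (hρ : ∀ᵐ x ∂ρ, x ∈ Set.Icc a b) :
      dist (∫ x, p.eval x ∂ρ) (∫ x, f x ∂ρ) ≤ ε / C * ρ.real Set.univ := by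
    rw [dist_eq_norm, ← integral_sub
      (integrable_of_continuous_of_ae_mem_Icc hρ p.continuous) (f.integrable ρ)]
    exact norm_integral_le_of_norm_le_const (hρ.mono fun x hx ↦ (hp x hx).le)
  calc dist (∫ x, f x ∂μ) (∫ x, f x ∂ν)
      ≤ dist (∫ x, p.eval x ∂μ) (∫ x, f x ∂μ) + dist (∫ x, p.eval x ∂ν) (∫ x, f x ∂ν) := by
        rw [integral_polynomial_eq_of_moments_eq hμ hν hmoments p]
        exact dist_triangle_left _ _ _
    _ ≤ ε / C * μ.real Set.univ + ε / C * ν.real Set.univ :=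
        add_le_add (happrox μ hμ) (happrox ν hν)
    _ ≤ ε / C * C := by rw [← mul_add]; gcongr; exact (lt_add_one _).le
    _ = ε := div_mul_cancel₀ ε hC.ne'

end Moments

section IsometryInvariant

open Polynomial

open scoped RealInnerProductSpace

variable {E : Type*} [NormedAddCommGroup E] [InnerProductSpace ℝ E] [MeasurableSpace E]
  [BorelSpace E] {μ : Measure E}

/-- Invariance of a measure under all linear isometries of the ambient space, the sense in which
the uniform measure on a centred sphere is rotation-invariant. -/
def IsIsometryInvariant (μ : Measure E) : Prop :=
  ∀ L : E ≃ₗᵢ[ℝ] E, μ.map L = μ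

lemma integrable_inner_pow_mul_inner_pow {p q : ℕ} (hμ : Integrable (fun x ↦ ‖x‖ ^ (p + q)) μ)
    (u v : E) : Integrable (fun x ↦ ⟪u, x⟫ ^ p * ⟪v, x⟫ ^ q) μ := by
  refine (hμ.const_mul (‖u‖ ^ p * ‖v‖ ^ q)).mono' (by fun_prop) (.of_forall fun x ↦ ?_)
  calc ‖⟪u, x⟫ ^ p * ⟪v, x⟫ ^ q‖ = |⟪u, x⟫| ^ p * |⟪v, x⟫| ^ q := by simp
    _ ≤ (‖u‖ * ‖x‖) ^ p * (‖v‖ * ‖x‖) ^ q := by gcongr <;> exact abs_real_inner_le_norm _ _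
    _ = ‖u‖ ^ p * ‖v‖ ^ q * ‖x‖ ^ (p + q) := by ring

lemma integral_inner_add_smul_pow {k : ℕ} (hμ : Integrable (fun x ↦ ‖x‖ ^ k) μ) (e f : E)
    (t : ℝ) :
    ∫ x, ⟪e + t • f, x⟫ ^ k ∂μ
      = (∑ l ∈ Finset.range (k + 1),
          C ((∫ x, ⟪e, x⟫ ^ (k - l) * ⟪f, x⟫ ^ l ∂μ) * k.choose l) * X ^ l).eval t := by
  have hint {l : ℕ} (hl : l ∈ Finset.range (k + 1)) :
      Integrable (fun x ↦ ⟪e, x⟫ ^ (k - l) * ⟪f, x⟫ ^ l) μ :=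
    integrable_inner_pow_mul_inner_pow
      (by rwa [Nat.sub_add_cancel (Finset.mem_range_succ_iff.1 hl)]) e f
  have hexpand (x : E) : ⟪e + t • f, x⟫ ^ k = ∑ l ∈ Finset.range (k + 1),
      t ^ l * k.choose l * (⟪e, x⟫ ^ (k - l) * ⟪f, x⟫ ^ l) := by
    rw [inner_add_left, real_inner_smul_left, add_comm, add_pow]
    exact Finset.sum_congr rfl fun l _ ↦ by ring
  simp only [hexpand, eval_finsetSum, eval_mul, eval_C, eval_pow, eval_X]
  rw [integral_finsetSum _ fun l hl ↦ (hint hl).const_mul _]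
  refine Finset.sum_congr rfl fun l _ ↦ ?_
  rw [integral_const_mul]
  ring

namespace IsIsometryInvariant

lemma map_inner_eq (hμ : IsIsometryInvariant μ) {u v : E} (huv : ‖u‖ = ‖v‖) :
    μ.map (fun x ↦ ⟪u, x⟫) = μ.map (fun x ↦ ⟪v, x⟫) := by
  set L : E ≃ₗᵢ[ℝ] E := (ℝ ∙ (u - v))ᗮ.reflection
  have hL : L u = v := Submodule.reflection_sub huv
  have hcomp : (fun x ↦ ⟪v, x⟫) ∘ L = fun x ↦ ⟪u, x⟫ := by
    funext x
    rw [Function.comp_apply, ← hL, L.inner_map_map]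
  conv_rhs => rw [← hμ L]
  rw [Measure.map_map (by fun_prop) L.continuous.measurable, hcomp]

lemma integral_comp_inner_eq (hμ : IsIsometryInvariant μ) {u v : E} (huv : ‖u‖ = ‖v‖)
    {g : ℝ → ℝ} (hg : Continuous g) : ∫ x, g ⟪u, x⟫ ∂μ = ∫ x, g ⟪v, x⟫ ∂μ := by
  rw [← integral_map (φ := fun x ↦ ⟪u, x⟫) (by fun_prop) hg.aestronglyMeasurable,
    ← integral_map (φ := fun x ↦ ⟪v, x⟫) (by fun_prop) hg.aestronglyMeasurable,
    hμ.map_inner_eq huv]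

lemma odd_moment_inner (hμ : IsIsometryInvariant μ) (u : E) {k : ℕ} (hk : Odd k) :
    ∫ x, ⟪u, x⟫ ^ k ∂μ = 0 := by
  have hneg := hμ.integral_comp_inner_eq (norm_neg u) (continuous_pow k)
  simp only [inner_neg_left, hk.neg_pow, integral_neg] at hneg
  exact self_eq_neg.1 hneg.symm

-- Compare the coefficients of `t ^ 2` in
-- `∫ ⟪e + t • f, x⟫ ^ (2 * m + 2) = (1 + t ^ 2) ^ (m + 1) * ∫ ⟪e, x⟫ ^ (2 * m + 2)`.
lemma mixed_moment_inner (hμ : IsIsometryInvariant μ) {m : ℕ}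
    (hint : Integrable (fun x ↦ ‖x‖ ^ (2 * m + 2)) μ) {e f : E} (hef : ‖e‖ = ‖f‖)
    (horth : ⟪e, f⟫ = 0) :
    (2 * m + 1) * ∫ x, ⟪e, x⟫ ^ (2 * m) * ⟪f, x⟫ ^ 2 ∂μ = ∫ x, ⟪e, x⟫ ^ (2 * m + 2) ∂μ := by
  set M := ∫ x, ⟪e, x⟫ ^ (2 * m + 2) ∂μ
  have hnorm (t : ℝ) : ‖e + t • f‖ = ‖√(1 + t ^ 2) • e‖ := by
    rw [← sq_eq_sq₀ (norm_nonneg _) (norm_nonneg _), norm_add_sq_real, real_inner_smul_right,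
      horth, norm_smul, norm_smul, mul_pow, mul_pow, norm_eq_abs, norm_eq_abs, sq_abs, sq_abs,
      sq_sqrt (by positivity), hef]
    ring
  have hrotate (t : ℝ) : ∫ x, ⟪e + t • f, x⟫ ^ (2 * m + 2) ∂μ
      = (C M * expand ℝ 2 ((1 + X) ^ (m + 1))).eval t := by
    rw [hμ.integral_comp_inner_eq (hnorm t) (continuous_pow _)]
    simp only [real_inner_smul_left, mul_pow, integral_const_mul]
    have hpow : √(1 + t ^ 2) ^ (2 * m + 2) = (1 + t ^ 2) ^ (m + 1) := by
      rw [← mul_add_one, pow_mul, sq_sqrt (by positivity)]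
    simp [hpow, M, mul_comm M]
  have hcoeff := congrArg (coeff · 2) <| Polynomial.funext fun t ↦
    (integral_inner_add_smul_pow hint e f t).symm.trans (hrotate t)
  simp only [finsetSum_coeff, coeff_C_mul, coeff_X_pow, coeff_expand two_pos, mul_ite, mul_one,
    mul_zero, Finset.sum_ite_eq, Finset.mem_range, show 2 < 2 * m + 2 + 1 by lia, dvd_refl,
    if_true, Nat.add_sub_cancel, coeff_one_add_X_pow, Nat.cast_choose_two, Nat.choose_one_right,
    Nat.div_self two_pos] at hcoeff
  push_cast at hcoeff
  have hm : (m + 1 : ℝ) ≠ 0 := by positivity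
  refine mul_left_cancel₀ hm ?_
  linear_combination hcoeff

lemma moment_inner_recurrence (hμ : IsIsometryInvariant μ) {ι : Type*} [Fintype ι]
    (b : OrthonormalBasis ι ℝ E) (i : ι) {m : ℕ}
    (hint : Integrable (fun x ↦ ‖x‖ ^ (2 * m + 2)) μ) :
    (2 * m + 1) * ∫ x, ⟪b i, x⟫ ^ (2 * m) * ‖x‖ ^ 2 ∂μ
      = (2 * m + Fintype.card ι) * ∫ x, ⟪b i, x⟫ ^ (2 * m + 2) ∂μ := by
  classical
  have hsum : ∫ x, ⟪b i, x⟫ ^ (2 * m) * ‖x‖ ^ 2 ∂μ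
      = ∑ j, ∫ x, ⟪b i, x⟫ ^ (2 * m) * ⟪b j, x⟫ ^ 2 ∂μ := by
    rw [← integral_finsetSum _ fun j _ ↦ integrable_inner_pow_mul_inner_pow hint (b i) (b j)]
    simp only [← Finset.mul_sum, b.sum_sq_inner_right]
  have hterm (j : ι) (hj : j ∈ Finset.univ.erase i) :
      (2 * m + 1) * ∫ x, ⟪b i, x⟫ ^ (2 * m) * ⟪b j, x⟫ ^ 2 ∂μ
        = ∫ x, ⟪b i, x⟫ ^ (2 * m + 2) ∂μ :=
    hμ.mixed_moment_inner hint (by simp) (b.inner_eq_zero (Finset.ne_of_mem_erase hj).symm)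
  have hcard : ((Finset.univ.erase i).card : ℝ) = Fintype.card ι - 1 := by
    rw [Finset.card_erase_of_mem (Finset.mem_univ i), Finset.card_univ,
      Nat.cast_pred (Fintype.card_pos_iff.2 ⟨i⟩)]
  rw [hsum, ← Finset.add_sum_erase _ _ (Finset.mem_univ i), mul_add, Finset.mul_sum,
    Finset.sum_congr rfl hterm, Finset.sum_const, nsmul_eq_mul, hcard]
  simp only [← pow_add]
  ring

end IsIsometryInvariant

end IsometryInvariant

section Sphere

open scoped RealInnerProductSpace

variable {E : Type*} [NormedAddCommGroup E] [InnerProductSpace ℝ E] [MeasurableSpace E]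
  [BorelSpace E] {μ : Measure E} {R : ℝ}

namespace IsIsometryInvariant

lemma moment_inner_recurrence_of_norm_eq [IsFiniteMeasure μ] (hμ : IsIsometryInvariant μ)
    (hR : ∀ᵐ x ∂μ, ‖x‖ = R) {ι : Type*} [Fintype ι] (b : OrthonormalBasis ι ℝ E) (i : ι) (m : ℕ) :
    (2 * m + 1) * R ^ 2 * ∫ x, ⟪b i, x⟫ ^ (2 * m) ∂μ
      = (2 * m + Fintype.card ι) * ∫ x, ⟪b i, x⟫ ^ (2 * m + 2) ∂μ := by
  have hint : Integrable (fun x ↦ ‖x‖ ^ (2 * m + 2)) μ :=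
    (integrable_const (R ^ (2 * m + 2))).congr (hR.mono fun x hx ↦ by simp only [hx])
  have hR' : ∫ x, ⟪b i, x⟫ ^ (2 * m) * ‖x‖ ^ 2 ∂μ = (∫ x, ⟪b i, x⟫ ^ (2 * m) ∂μ) * R ^ 2 := by
    rw [← integral_mul_const]
    exact integral_congr_ae (hR.mono fun x hx ↦ by simp only [hx])
  rw [← hμ.moment_inner_recurrence b i hint, hR']
  ring

lemma even_moment_inner [IsProbabilityMeasure μ] (hμ : IsIsometryInvariant μ)
    (hR : ∀ᵐ x ∂μ, ‖x‖ = R) {ι : Type*} [Fintype ι] (b : OrthonormalBasis ι ℝ E) (i : ι)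
    (hι : 1 < Fintype.card ι) (m : ℕ) :
    ∫ x, ⟪b i, x⟫ ^ (2 * m) ∂μ
      = R ^ (2 * m) * ∫ t, t ^ (2 * m) ∂symmetricBeta ((Fintype.card ι - 1) / 2) := by
  set v : ℝ := (Fintype.card ι - 1) / 2 with hv
  have hv0 : 0 < v := half_pos (sub_pos.2 (by exact_mod_cast hι))
  have := isProbabilityMeasure_symmetricBeta hv0
  induction m with
  | zero => simp
  | succ m ih =>
    have hsphere := hμ.moment_inner_recurrence_of_norm_eq hR b i m
    have hbeta := moment_symmetricBeta_recurrence hv0 (2 * m)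
    have hcard : (2 * m + 1 + 2 * v : ℝ) = 2 * m + Fintype.card ι := by rw [hv]; ring
    have hne : (2 * m + Fintype.card ι : ℝ) ≠ 0 := by positivity
    push_cast [hcard] at hbeta
    rw [ih] at hsphere
    refine mul_left_cancel₀ hne ?_
    rw [mul_add_one]
    linear_combination -hsphere + R ^ (2 * m + 2) * hbeta

lemma moment_inner [IsProbabilityMeasure μ] (hμ : IsIsometryInvariant μ)
    (hR : ∀ᵐ x ∂μ, ‖x‖ = R) (hE : 1 < Module.finrank ℝ E) (u : E) (k : ℕ) :
    ∫ x, ⟪u, x⟫ ^ k ∂μ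
      = (R * ‖u‖) ^ k * ∫ t, t ^ k ∂symmetricBeta ((Module.finrank ℝ E - 1) / 2) := by
  have : FiniteDimensional ℝ E := .of_finrank_pos (by lia)
  obtain hk | hk := k.even_or_odd
  · obtain ⟨m, rfl⟩ := hk.exists_two_nsmul
    set b := stdOrthonormalBasis ℝ E
    let i : Fin (Module.finrank ℝ E) := ⟨0, by lia⟩
    have hub : ‖u‖ = ‖‖u‖ • b i‖ := by simp [norm_smul]
    have heven := hμ.even_moment_inner hR b i (by rwa [Fintype.card_fin]) m
    rw [Fintype.card_fin] at heven
    rw [hμ.integral_comp_inner_eq hub (continuous_pow _)]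
    simp only [real_inner_smul_left, mul_pow, integral_const_mul, smul_eq_mul, heven]
    ring
  · rw [hμ.odd_moment_inner u hk,
      odd_moment_symmetricBeta (half_pos (sub_pos.2 (by exact_mod_cast hE))) hk, mul_zero]

theorem map_inner_eq_map_symmetricBeta [IsProbabilityMeasure μ] (hμ : IsIsometryInvariant μ)
    (hR : ∀ᵐ x ∂μ, ‖x‖ = R) (hE : 1 < Module.finrank ℝ E) (u : E) :
    μ.map (fun x ↦ ⟪u, x⟫)
      = (symmetricBeta ((Module.finrank ℝ E - 1) / 2)).map (fun t ↦ R * ‖u‖ * t) := by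
  have := isProbabilityMeasure_symmetricBeta
    (half_pos (sub_pos.2 (by exact_mod_cast hE : (1 : ℝ) < Module.finrank ℝ E)))
  refine measure_eq_of_moments_eq (a := -|R * ‖u‖|) (b := |R * ‖u‖|)
    ((ae_map_iff (by fun_prop) measurableSet_Icc).2 ?_)
    ((ae_map_iff (by fun_prop) measurableSet_Icc).2 ?_) fun k ↦ ?_
  · filter_upwards [hR] with x hx
    rw [← hx, mul_comm, abs_of_nonneg (by positivity : 0 ≤ ‖u‖ * ‖x‖)]
    exact abs_le.1 (abs_real_inner_le_norm u x)
  · filter_upwards [ae_abs_le_one_symmetricBeta _] with t ht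
    refine abs_le.1 ?_
    rw [abs_mul]
    exact mul_le_of_le_one_right (abs_nonneg _) ht
  · rw [integral_map (by fun_prop) (by fun_prop), integral_map (by fun_prop) (by fun_prop),
      hμ.moment_inner hR hE u k]
    simp only [mul_pow, integral_const_mul]

theorem integral_comp_inner [IsProbabilityMeasure μ] (hμ : IsIsometryInvariant μ)
    (hR : ∀ᵐ x ∂μ, ‖x‖ = R) (hE : 1 < Module.finrank ℝ E) (u : E) {g : ℝ → ℝ}
    (hg : Continuous g) :
    ∫ x, g ⟪u, x⟫ ∂μ
      = Gamma (Module.finrank ℝ E / 2) / (√π * Gamma ((Module.finrank ℝ E - 1) / 2))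
        * ∫ t in (-1 : ℝ)..1,
            g (R * ‖u‖ * t) * (1 - t ^ 2) ^ (((Module.finrank ℝ E : ℝ) - 3) / 2) := by
  rw [← integral_map (φ := fun x ↦ ⟪u, x⟫) (by fun_prop) hg.aestronglyMeasurable,
    hμ.map_inner_eq_map_symmetricBeta hR hE,
    integral_map (by fun_prop) hg.aestronglyMeasurable,
    integral_symmetricBeta (half_pos (sub_pos.2 (by exact_mod_cast hE)))]
  ring_nf

theorem integral_exp_neg_norm_sub_sq [IsProbabilityMeasure μ] (hμ : IsIsometryInvariant μ)
    (hR : ∀ᵐ x ∂μ, ‖x‖ = R) (hE : 1 < Module.finrank ℝ E) (N : ℝ) (y : E) :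
    ∫ x, exp (-‖y - x‖ ^ 2 / (2 * N)) ∂μ
      = Gamma (Module.finrank ℝ E / 2) / (√π * Gamma ((Module.finrank ℝ E - 1) / 2))
        * exp (-(R ^ 2 + ‖y‖ ^ 2) / (2 * N))
        * ∫ t in (-1 : ℝ)..1,
            exp (R * ‖y‖ * t / N) * (1 - t ^ 2) ^ (((Module.finrank ℝ E : ℝ) - 3) / 2) := by
  have hfactor : ∀ᵐ x ∂μ, exp (-‖y - x‖ ^ 2 / (2 * N))
      = exp (-(R ^ 2 + ‖y‖ ^ 2) / (2 * N)) * exp (⟪y, x⟫ / N) := by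
    filter_upwards [hR] with x hx
    rw [norm_sub_sq_real, hx, ← exp_add]
    ring_nf
  rw [integral_congr_ae hfactor, integral_const_mul,
    hμ.integral_comp_inner hR hE y (g := fun s ↦ exp (s / N)) (by fun_prop)]
  ring

end IsIsometryInvariant

end Sphere

section EuclideanSpace

variable {ι : Type*} [Fintype ι] [DecidableEq ι] {σ : Measure (ι → ℝ)}

lemma isIsometryInvariant_map_toLp
    (hσ : ∀ A : Matrix ι ι ℝ, A * A.transpose = 1 → σ.map A.mulVec = σ) :
    IsIsometryInvariant (σ.map (WithLp.toLp 2)) := by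
  intro L
  let b := EuclideanSpace.basisFun ι ℝ
  let A : Matrix ι ι ℝ := L.toMatrix b.toBasis b.toBasis
  have hA : A * A.transpose = 1 :=
    (Matrix.mem_orthogonalGroup_iff _ _).1 (L.toMatrix_mem_unitaryGroup b b)
  have hAL : L ∘ WithLp.toLp 2 = WithLp.toLp 2 ∘ A.mulVec := by
    ext x i
    exact (congrFun (LinearMap.toMatrix_mulVec_repr b.toBasis b.toBasis
      L.toLinearEquiv.toLinearMap (WithLp.toLp 2 x)) i).symm
  have hAm : Measurable A.mulVec := by fun_prop
  conv_rhs => rw [← hσ A hA]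
  rw [Measure.map_map L.continuous.measurable (by fun_prop), hAL,
    Measure.map_map (by fun_prop) hAm]

end EuclideanSpace

/-- the density of `Y = X + Z`, with `X` uniform on the sphere of radius `R`
in `ℝⁿ` and `Z ~ N(0, N·Iₙ)` independent, is
`Q^cc(y) = [Γ(n/2)/(√π Γ((n−1)/2) (2πN)^{n/2})] · e^{−(R²+‖y‖²)/(2N)} ·
∫_{−1}^1 e^{R‖y‖t/N} (1−t²)^{(n−3)/2} dt` for `y ≠ 0`. -/
theorem Qcc_closed_form (N : ℝ) (hN : 0 < N) (n : ℕ) (hn : 2 ≤ n) (R : ℝ) (hR : 0 < R)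
    (σ : Measure (Fin n → ℝ)) (hσprob : IsProbabilityMeasure σ)
    (hσsupp : σ ({x : Fin n → ℝ | ∑ i, (x i)^2 = R^2})ᶜ = 0)
    (hσinv : ∀ A : Matrix (Fin n) (Fin n) ℝ, A * A.transpose = 1 →
      σ.map (A.mulVec) = σ) :
    ∀ y : Fin n → ℝ, y ≠ 0 →
      (∫ x, (2 * π * N) ^ (-(n : ℝ)/2) * Real.exp (-(∑ i, (y i - x i)^2) / (2 * N)) ∂σ)
        = (Real.Gamma (n/2) /
            (Real.sqrt π * Real.Gamma ((n - 1)/2) * (2 * π * N) ^ ((n : ℝ)/2)))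
          * Real.exp (-(R^2 + ∑ i, (y i)^2) / (2 * N))
          * ∫ t in (-1:ℝ)..1,
              Real.exp (R * Real.sqrt (∑ i, (y i)^2) * t / N) * (1 - t^2) ^ (((n : ℝ) - 3)/2) := by
  intro y _
  have hm : Measurable (WithLp.toLp 2 : (Fin n → ℝ) → EuclideanSpace ℝ (Fin n)) := by fun_prop
  have hprob : IsProbabilityMeasure (σ.map (WithLp.toLp 2)) :=
    Measure.isProbabilityMeasure_map hm.aemeasurable
  have hsphere : ∀ᵐ x : EuclideanSpace ℝ (Fin n) ∂σ.map (WithLp.toLp 2), ‖x‖ = R := by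
    refine (ae_map_iff hm.aemeasurable (measurableSet_eq_fun (by fun_prop) (by fun_prop))).2 ?_
    filter_upwards [show ∀ᵐ x ∂σ, ∑ i, x i ^ 2 = R ^ 2 from hσsupp] with x hx
    simp [EuclideanSpace.norm_eq, hx, hR.le]
  have hclosed := (isIsometryInvariant_map_toLp hσinv).integral_exp_neg_norm_sub_sq hsphere
    (by rw [finrank_euclideanSpace_fin]; exact hn) N (WithLp.toLp 2 y)
  rw [integral_map hm.aemeasurable (by fun_prop)] at hclosed
  simp only [EuclideanSpace.norm_eq, norm_eq_abs, sq_abs, PiLp.sub_apply,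
    sq_sqrt (Finset.sum_nonneg fun _ _ ↦ sq_nonneg _), finrank_euclideanSpace_fin] at hclosed
  rw [integral_const_mul, hclosed, neg_div, rpow_neg (by positivity), div_mul_eq_div_div _ (_ * _)]
  ring
end

section
/- Fix N > 0 and Γ > 0. There exist positive constants C, n₀, ε₀ (with ε₀ < Γ) and Δ₀ such that for all integers n ≥ n₀, all real ε with |ε| ≤ ε₀, and all real Δ with 0 ≤ Δ ≤ Δ₀: for every y ∈ ℝⁿ with Γ + N − Δ ≤ ‖y‖²/n ≤ Γ + N + Δ, one has | log( Q^cc_{Γ+ε,n}(y) / Q^cc_{Γ,n}(y) ) | ≤ C·( log n + n·ε² + n·Δ² + n·|ε|·Δ ). -/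
open Real MeasureTheory ProbabilityTheory

/-- `UniformSphereFamily N σ`: `σ n R` is, for every `n ≥ 1` and `R > 0`, the unique
rotation-invariant (uniform) Borel probability measure on the sphere of radius `R`
in `ℝⁿ`. -/
def UniformSphereFamily (σ : ∀ n : ℕ, ℝ → Measure (Fin n → ℝ)) : Prop :=
  ∀ (n : ℕ), 1 ≤ n → ∀ R : ℝ, 0 < R →
    IsProbabilityMeasure (σ n R) ∧
    σ n R ({x : Fin n → ℝ | ∑ i, (x i)^2 = R^2})ᶜ = 0 ∧
    ∀ A : Matrix (Fin n) (Fin n) ℝ, A * A.transpose = 1 →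
      (σ n R).map (A.mulVec) = σ n R

/-- `Qcc σ N Γ' n`: the density on `ℝⁿ` of `Y = X + Z`, where `X` is uniform on the
sphere of radius `√(nΓ')` and `Z ~ N(0, N·Iₙ)` is independent of `X`. -/
noncomputable def Qcc (σ : ∀ n : ℕ, ℝ → Measure (Fin n → ℝ)) (N Γ' : ℝ) (n : ℕ)
    (y : Fin n → ℝ) : ℝ :=
  ∫ x, (2 * π * N) ^ (-(n : ℝ)/2) * Real.exp (-(∑ i, (y i - x i)^2) / (2 * N))
    ∂(σ n (Real.sqrt (n * Γ')))

/-!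
For `y` with `‖y‖² = n q`, expanding the square makes `log Q^cc_{γ,n}(y)` equal, up to a constant,
to `-n (q + γ) / (2N) + K (n √(q γ) / N)`, where `K` is the cumulant generating function of one
coordinate of the uniform law on the unit sphere.  Tilt this law along one coordinate: by rotation
invariance every other coordinate has second moment `K'(t) / t`, and the second moments of all
coordinates add up to `1`, so `K` satisfies the Riccati equation
`t (K'' + K'²) + (n - 1) K' = t`.  Since `K'' ≥ 0`, and by an integrating factor, `r = K'(n τ)`
solves `r = τ (1 - r²)` up to an error `1 / n`.  At `q = γ + N` the exact root `√γ / √(γ + N)` makes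
the score `∂_γ log Q^cc_{γ,n}(y)` vanish, and the roots are Lipschitz in `τ`.  Hence the score is
`O(1 + n |q - γ - N|)`; integrating it from `Γ` to `Γ + ε` bounds the log-ratio by
`O(|ε| + n ε² + n |ε| Δ)`.
-/

section Orthogonal

open scoped Matrix

variable {ι : Type*} [Fintype ι]

lemma sq_dotProduct_le (u v : ι → ℝ) :
    (u ⬝ᵥ v) ^ 2 ≤ (u ⬝ᵥ u) * (v ⬝ᵥ v) := by
  simpa only [dotProduct, ← sq] using Finset.sum_mul_sq_le_sq_mul_sq Finset.univ u v

lemma exists_mul_transpose_eq_one_mulVec_eq [DecidableEq ι] {u v : ι → ℝ} (h : u ⬝ᵥ u = v ⬝ᵥ v) :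
    ∃ A : Matrix ι ι ℝ, A * Aᵀ = 1 ∧ A *ᵥ u = v := by
  let b := EuclideanSpace.basisFun ι ℝ
  have hnorm : ‖WithLp.toLp 2 u‖ = ‖WithLp.toLp 2 v‖ := by
    simp only [EuclideanSpace.norm_eq, Real.norm_eq_abs, sq_abs]
    simpa only [dotProduct, ← sq] using congrArg Real.sqrt h
  let f := Submodule.reflection (ℝ ∙ (WithLp.toLp 2 u - WithLp.toLp 2 v))ᗮ
  refine ⟨LinearMap.toMatrix b.toBasis b.toBasis f.toLinearEquiv, ?_, ?_⟩
  · exact (Matrix.mem_orthogonalGroup_iff ι ℝ).mp (f.toMatrix_mem_unitaryGroup b b)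
  · refine (LinearMap.toMatrix_mulVec_repr b.toBasis b.toBasis f.toLinearEquiv.toLinearMap
      (WithLp.toLp 2 u)).trans ?_
    exact congrArg (fun x => ⇑(b.toBasis.repr x)) (Submodule.reflection_sub hnorm)

end Orthogonal

section Tilted

variable {Ω : Type*} [MeasurableSpace Ω] {μ : Measure Ω}

lemma mem_interior_integrableExpSet_of_ae_abs_le [IsFiniteMeasure μ] {X : Ω → ℝ} {c : ℝ}
    (hX : AEMeasurable X μ) (hc : ∀ᵐ ω ∂μ, |X ω| ≤ c) (t : ℝ) :
    t ∈ interior (integrableExpSet X μ) := by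
  have huniv : integrableExpSet X μ = Set.univ := Set.eq_univ_of_forall fun _ =>
    integrable_exp_mul_of_mem_Icc hX (hc.mono fun _ hω => Set.mem_Icc.mpr (abs_le.mp hω))
  simp [huniv]

lemma integral_sq_tilted_mul [NeZero μ] {X : Ω → ℝ} {t : ℝ}
    (ht : t ∈ interior (integrableExpSet X μ)) :
    ∫ ω, X ω ^ 2 ∂(μ.tilted (t * X ·)) =
      iteratedDeriv 2 (cgf X μ) t + deriv (cgf X μ) t ^ 2 := by
  have ht' : t ∈ integrableExpSet X μ := interior_subset ht
  have := isProbabilityMeasure_tilted ht'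
  rw [← variance_tilted_mul ht, ← integral_tilted_mul_self ht,
    variance_eq_sub (memLp_tilted_mul ht 2)]
  simp

end Tilted

lemma mul_const_sub_sq_le_of_riccati {K m v : ℝ → ℝ} {c : ℝ} {p : ℕ} (hp : p ≠ 0)
    (hK : ∀ t, HasDerivAt K (m t) t) (hm : ∀ t, HasDerivAt m (v t) t)
    (h : ∀ t, 0 < t → t * (v t + m t ^ 2) + p * m t = c * t) {t : ℝ} (ht : 0 < t) :
    t * (c - m t ^ 2) ≤ (p + 1) * m t := by
  -- `t ^ p * exp (2 * K t)` is an integrating factor for the Riccati equation.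
  let Φ : ℝ → ℝ := fun t => t ^ p * exp (2 * K t) * ((p + 1) * m t - t * (c - m t ^ 2))
  have hcont : Continuous Φ := by
    have hKc : Continuous K := continuous_iff_continuousAt.mpr fun t => (hK t).continuousAt
    have hmc : Continuous m := continuous_iff_continuousAt.mpr fun t => (hm t).continuousAt
    fun_prop
  have hΦ : ∀ t, 0 < t → HasDerivAt Φ (2 * t ^ p * exp (2 * K t) * m t ^ 2) t := by
    intro t ht
    refine (((hasDerivAt_pow p t).mul ((hK t).const_mul 2).exp).mul (((hm t).const_mul _).sub
      ((hasDerivAt_id t).mul (((hm t).pow 2).const_sub c)))).congr_deriv ?_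
    obtain ⟨k, rfl⟩ := Nat.exists_eq_succ_of_ne_zero hp
    have hode := h t ht
    simp only [Pi.mul_apply, Pi.sub_apply, Pi.pow_apply, id]
    push_cast [Nat.succ_eq_add_one] at hode ⊢
    linear_combination (exp (2 * K t) * t ^ k * (k + 2 + 2 * t * m t)) * hode
  have hmono : MonotoneOn Φ (Set.Ici 0) := by
    refine monotoneOn_of_hasDerivWithinAt_nonneg (convex_Ici 0) hcont.continuousOn
      (fun t ht => (hΦ t (by simpa using ht)).hasDerivWithinAt) fun t ht => ?_
    have : 0 < t := by simpa using ht
    positivity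
  have hnonneg : 0 ≤ Φ t := by
    simpa [Φ, hp] using hmono Set.self_mem_Ici ht.le ht.le
  exact sub_nonneg.mp (nonneg_of_mul_nonneg_right hnonneg (by positivity))

lemma abs_sub_le_of_eq_mul_one_sub_sq {r s τ τ₀ δ : ℝ} (hr : 0 ≤ r) (hs₀ : 0 ≤ s) (hs₁ : s ≤ 1)
    (hτ : 0 ≤ τ) (hs : s = τ₀ * (1 - s ^ 2)) (h : |r - τ * (1 - r ^ 2)| ≤ δ) :
    |r - s| ≤ |τ - τ₀| + δ := by
  have hfactor : (r - s) * (1 + τ * (r + s)) =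
      (τ - τ₀) * (1 - s ^ 2) + (r - τ * (1 - r ^ 2)) := by
    linear_combination -hs
  have hslope : 1 ≤ 1 + τ * (r + s) := le_add_of_nonneg_right (by positivity)
  have hsq : |1 - s ^ 2| ≤ 1 := abs_le.mpr ⟨by nlinarith, by nlinarith⟩
  calc |r - s| ≤ |r - s| * (1 + τ * (r + s)) := le_mul_of_one_le_right (abs_nonneg _) hslope
    _ = |(τ - τ₀) * (1 - s ^ 2) + (r - τ * (1 - r ^ 2))| := by
      rw [← hfactor, abs_mul, abs_of_pos (zero_lt_one.trans_le hslope)]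
    _ ≤ |τ - τ₀| * |1 - s ^ 2| + |r - τ * (1 - r ^ 2)| := by
      rw [← abs_mul]; exact abs_add_le _ _
    _ ≤ |τ - τ₀| + δ := add_le_add (mul_le_of_le_one_right (abs_nonneg _) hsq) h

lemma abs_sqrt_sub_sqrt_mul_sqrt_le {a b : ℝ} (ha : 0 ≤ a) (hb : 0 ≤ b) :
    |√a - √b| * √b ≤ |a - b| := by
  have hfactor : (√a - √b) * (√a + √b) = a - b := by
    linear_combination mul_self_sqrt ha - mul_self_sqrt hb
  rw [← hfactor, abs_mul, abs_of_nonneg (by positivity : 0 ≤ √a + √b)]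
  exact mul_le_mul_of_nonneg_left (le_add_of_nonneg_left (sqrt_nonneg a)) (abs_nonneg _)

lemma abs_sqrt_div_sqrt_sub_one_le {a b : ℝ} (ha : 0 ≤ a) (hb : 0 < b) :
    |√a / √b - 1| ≤ |a - b| / b := by
  have hb' := sqrt_pos.mpr hb
  rw [div_sub_one hb'.ne', abs_div, abs_of_pos hb', div_le_div_iff₀ hb' hb]
  calc |√a - √b| * b = |√a - √b| * √b * √b := by rw [mul_assoc, mul_self_sqrt hb.le]
    _ ≤ |a - b| * √b := by gcongr; exact abs_sqrt_sub_sqrt_mul_sqrt_le ha hb.le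

/-- `μ` is the uniform probability measure on the sphere of radius `R` in `ℝ^ι`, encoded by
orthogonal invariance together with `‖x‖ = R` almost everywhere. -/
structure IsUniformOnSphere {ι : Type*} [Fintype ι] [DecidableEq ι] (μ : Measure (ι → ℝ)) (R : ℝ) :
    Prop extends IsProbabilityMeasure μ where
  ae_dotProduct_self : ∀ᵐ x ∂μ, x ⬝ᵥ x = R ^ 2
  map_mulVec : ∀ A : Matrix ι ι ℝ, A * A.transpose = 1 → μ.map A.mulVec = μ

namespace IsUniformOnSphere

open scoped Matrix

variable {ι : Type*} [Fintype ι] [DecidableEq ι] {μ ν : Measure (ι → ℝ)} {R S : ℝ}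

lemma integral_exp_dotProduct_congr (hμ : IsUniformOnSphere μ R) {u v : ι → ℝ}
    (h : u ⬝ᵥ u = v ⬝ᵥ v) : ∫ x, exp (u ⬝ᵥ x) ∂μ = ∫ x, exp (v ⬝ᵥ x) ∂μ := by
  obtain ⟨A, hA, rfl⟩ := exists_mul_transpose_eq_one_mulVec_eq h
  have hA' : Aᵀ * A = 1 := mul_eq_one_comm.mp hA
  have hdot : ∀ x, A *ᵥ u ⬝ᵥ A *ᵥ x = u ⬝ᵥ x := fun x => by
    rw [Matrix.dotProduct_mulVec, ← Matrix.mulVec_transpose, Matrix.mulVec_mulVec, hA',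
      Matrix.one_mulVec]
  calc ∫ x, exp (u ⬝ᵥ x) ∂μ = ∫ x, exp (A *ᵥ u ⬝ᵥ A *ᵥ x) ∂μ := by simp only [hdot]
    _ = ∫ x, exp (A *ᵥ u ⬝ᵥ x) ∂μ.map A.mulVec := by
      rw [integral_map (by fun_prop) (by fun_prop)]
    _ = ∫ x, exp (A *ᵥ u ⬝ᵥ x) ∂μ := by rw [hμ.map_mulVec A hA]

lemma integral_exp_dotProduct (hμ : IsUniformOnSphere μ R) (i : ι) (v : ι → ℝ) :
    ∫ x, exp (v ⬝ᵥ x) ∂μ = mgf (fun x => x i) μ √(v ⬝ᵥ v) := by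
  rw [hμ.integral_exp_dotProduct_congr (v := Pi.single i √(v ⬝ᵥ v))]
  · simp [mgf]
  · simp [Real.mul_self_sqrt (by simpa using dotProduct_star_self_nonneg v)]

lemma ae_integral_exp_mul_dotProduct (hμ : IsUniformOnSphere μ R) (hν : IsUniformOnSphere ν S)
    (hS : 0 ≤ S) (i : ι) {t : ℝ} (ht : 0 ≤ t) :
    ∀ᵐ y ∂ν, ∫ x, exp (t * (y ⬝ᵥ x)) ∂μ = mgf (fun x => x i) μ (S * t) := by
  filter_upwards [hν.ae_dotProduct_self] with y hy
  have hty : √((t • y) ⬝ᵥ (t • y)) = S * t := by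
    rw [smul_dotProduct, dotProduct_smul, hy, smul_eq_mul, smul_eq_mul,
      show t * (t * S ^ 2) = (S * t) ^ 2 by ring, Real.sqrt_sq (by positivity)]
  rw [← hty, ← hμ.integral_exp_dotProduct i]
  simp only [smul_dotProduct, smul_eq_mul]

lemma integrable_exp_mul_dotProduct_prod (hμ : IsUniformOnSphere μ R)
    (hν : IsUniformOnSphere ν S) (t : ℝ) :
    Integrable (fun p : (ι → ℝ) × (ι → ℝ) => exp (t * (p.2 ⬝ᵥ p.1))) (μ.prod ν) := by
  have := hμ.toIsProbabilityMeasure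
  have := hν.toIsProbabilityMeasure
  refine integrable_exp_mul_of_mem_Icc (a := -(|S| * |R|)) (b := |S| * |R|) (by fun_prop) ?_
  filter_upwards [Measure.quasiMeasurePreserving_fst.ae hμ.ae_dotProduct_self,
    Measure.quasiMeasurePreserving_snd.ae hν.ae_dotProduct_self] with p hx hy
  have h := sq_dotProduct_le p.2 p.1
  rw [hx, hy, ← mul_pow, sq_le_sq, abs_mul] at h
  exact abs_le.mp h

lemma mgf_eval_mul_comm (hμ : IsUniformOnSphere μ R) (hν : IsUniformOnSphere ν S)
    (hR : 0 ≤ R) (hS : 0 ≤ S) (i : ι) {t : ℝ} (ht : 0 ≤ t) :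
    mgf (fun x => x i) μ (S * t) = mgf (fun x => x i) ν (R * t) := by
  have := hμ.toIsProbabilityMeasure
  have := hν.toIsProbabilityMeasure
  calc mgf (fun x => x i) μ (S * t) = ∫ y, ∫ x, exp (t * (y ⬝ᵥ x)) ∂μ ∂ν := by
        simp [integral_congr_ae (hμ.ae_integral_exp_mul_dotProduct hν hS i ht)]
    _ = ∫ x, ∫ y, exp (t * (y ⬝ᵥ x)) ∂ν ∂μ :=
        (integral_integral_swap (hμ.integrable_exp_mul_dotProduct_prod hν t)).symm
    _ = mgf (fun x => x i) ν (R * t) := by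
        simp_rw [dotProduct_comm _ (_ : ι → ℝ)]
        simp [integral_congr_ae (hν.ae_integral_exp_mul_dotProduct hμ hR i ht)]

lemma mem_interior_eval_of_absolutelyContinuous (hμ : IsUniformOnSphere μ R) {ρ : Measure (ι → ℝ)}
    [IsFiniteMeasure ρ] (hρ : ρ ≪ μ) (i : ι) (t : ℝ) :
    t ∈ interior (integrableExpSet (fun x => x i) ρ) := by
  refine mem_interior_integrableExpSet_of_ae_abs_le (c := |R|)
    (measurable_pi_apply i).aemeasurable (hρ.ae_le ?_) t
  filter_upwards [hμ.ae_dotProduct_self] with x hx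
  have h := sq_dotProduct_le (Pi.single i 1) x
  rw [hx] at h
  simpa [sq_le_sq] using h

lemma mem_interior_eval (hμ : IsUniformOnSphere μ R) (i : ι) (t : ℝ) :
    t ∈ interior (integrableExpSet (fun x => x i) μ) :=
  have := hμ.toIsProbabilityMeasure
  hμ.mem_interior_eval_of_absolutelyContinuous .rfl i t

lemma integrable_exp_mul_eval (hμ : IsUniformOnSphere μ R) (i : ι) (t : ℝ) :
    Integrable (fun x => exp (t * x i)) μ :=
  have ht : t ∈ integrableExpSet (fun x => x i) μ := interior_subset (hμ.mem_interior_eval i t)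
  ht

lemma mgf_eval_pos (hμ : IsUniformOnSphere μ R) (i : ι) (t : ℝ) :
    0 < mgf (fun x => x i) μ t :=
  have := hμ.toIsProbabilityMeasure
  mgf_pos (hμ.integrable_exp_mul_eval i t)

lemma isProbabilityMeasure_tilted (hμ : IsUniformOnSphere μ R) (i : ι) (t : ℝ) :
    IsProbabilityMeasure (μ.tilted fun x => t * x i) :=
  have := hμ.toIsProbabilityMeasure
  MeasureTheory.isProbabilityMeasure_tilted (hμ.integrable_exp_mul_eval i t)

lemma mem_interior_eval_tilted (hμ : IsUniformOnSphere μ R) (i j : ι) (t s : ℝ) :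
    s ∈ interior (integrableExpSet (fun x => x j) (μ.tilted fun x => t * x i)) :=
  hμ.mem_interior_eval_of_absolutelyContinuous (tilted_absolutelyContinuous μ (t * · i)) j s

lemma mgf_eval_tilted (hμ : IsUniformOnSphere μ R) {i j : ι} (hij : i ≠ j) (t s : ℝ) :
    mgf (fun x => x j) (μ.tilted fun x => t * x i) s =
      mgf (fun x => x i) μ √(t ^ 2 + s ^ 2) / mgf (fun x => x i) μ t := by
  have hdot : (Pi.single i t + Pi.single j s : ι → ℝ) ⬝ᵥ (Pi.single i t + Pi.single j s) =
      t ^ 2 + s ^ 2 := by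
    simp [hij, hij.symm, sq]
  rw [mgf, integral_exp_tilted, ← hdot, ← hμ.integral_exp_dotProduct i]
  simp [mgf, add_dotProduct]

lemma hasDerivAt_mgf_eval_tilted (hμ : IsUniformOnSphere μ R) {i j : ι} (hij : i ≠ j)
    {t : ℝ} (ht : 0 < t) (s : ℝ) :
    HasDerivAt (mgf (fun x => x j) (μ.tilted fun x => t * x i))
      (deriv (mgf (fun x => x i) μ) √(t ^ 2 + s ^ 2) / √(t ^ 2 + s ^ 2)
        / mgf (fun x => x i) μ t * s) s := by
  have hpos : 0 < t ^ 2 + s ^ 2 := by positivity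
  have hsqrt : HasDerivAt (fun s => √(t ^ 2 + s ^ 2)) (s / √(t ^ 2 + s ^ 2)) s := by
    refine (((hasDerivAt_pow 2 s).const_add (t ^ 2)).sqrt hpos.ne').congr_deriv ?_
    simp [mul_div_mul_left]
  have hmgf := (differentiableAt_mgf (hμ.mem_interior_eval i √(t ^ 2 + s ^ 2))).hasDerivAt
  refine (((hmgf.comp s hsqrt).div_const _).congr_of_eventuallyEq
    (.of_forall (hμ.mgf_eval_tilted hij t))).congr_deriv ?_
  ring

lemma differentiableAt_deriv_mgf_eval_sqrt_div (hμ : IsUniformOnSphere μ R) (i : ι) {t : ℝ}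
    (ht : 0 < t) (s : ℝ) :
    DifferentiableAt ℝ
      (fun s => deriv (mgf (fun x => x i) μ) √(t ^ 2 + s ^ 2) / √(t ^ 2 + s ^ 2)) s := by
  have hpos : 0 < t ^ 2 + s ^ 2 := by positivity
  have hsqrt : DifferentiableAt ℝ (fun s => √(t ^ 2 + s ^ 2)) s :=
    DifferentiableAt.sqrt (by fun_prop) hpos.ne'
  have hderiv := (analyticAt_mgf (hμ.mem_interior_eval i √(t ^ 2 + s ^ 2))).deriv.differentiableAt
  exact (hderiv.comp s hsqrt).div hsqrt (sqrt_pos.mpr hpos).ne'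

lemma mul_integral_sq_eval_tilted (hμ : IsUniformOnSphere μ R) {i j : ι} (hij : i ≠ j)
    {t : ℝ} (ht : 0 < t) :
    t * ∫ x, x j ^ 2 ∂(μ.tilted fun x => t * x i) = deriv (cgf (fun x => x i) μ) t := by
  let M := mgf (fun x => x i) μ
  let F : ℝ → ℝ := fun s => deriv M √(t ^ 2 + s ^ 2) / √(t ^ 2 + s ^ 2) / M t
  have hF : HasDerivAt F (deriv F 0) 0 :=
    ((hμ.differentiableAt_deriv_mgf_eval_sqrt_div i ht 0).div_const _).hasDerivAt
  have hcgf : deriv (cgf (fun x => x i) μ) t = deriv M t / M t := by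
    rw [deriv_cgf (hμ.mem_interior_eval i t), deriv_mgf (hμ.mem_interior_eval i t)]
  have hmoment : ∫ x, x j ^ 2 ∂(μ.tilted fun x => t * x i) = F 0 :=
    calc ∫ x, x j ^ 2 ∂(μ.tilted fun x => t * x i)
        = iteratedDeriv 2 (mgf (fun x => x j) (μ.tilted fun x => t * x i)) 0 :=
          (iteratedDeriv_mgf_zero (hμ.mem_interior_eval_tilted i j t 0) 2).symm
      _ = deriv (F * id) 0 := by
          rw [iteratedDeriv_succ, iteratedDeriv_one]
          exact congrArg (deriv · 0)
            (funext fun s => (hμ.hasDerivAt_mgf_eval_tilted hij ht s).deriv)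
      _ = F 0 := by simpa using (hF.mul (hasDerivAt_id 0)).deriv
  have hF₀ : F 0 = deriv M t / t / M t := by simp [F, sqrt_sq ht.le]
  rw [hmoment, hF₀, hcgf, ← mul_div_assoc, mul_div_cancel₀ _ ht.ne']

lemma integrable_sq_eval_tilted (hμ : IsUniformOnSphere μ R) (i j : ι) (t : ℝ) :
    Integrable (fun x => x j ^ 2) (μ.tilted fun x => t * x i) := by
  simpa using integrable_pow_of_mem_interior_integrableExpSet
    (hμ.mem_interior_eval_tilted i j t 0) 2

lemma sum_integral_sq_eval_tilted (hμ : IsUniformOnSphere μ R) (i : ι) (t : ℝ) :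
    ∑ j, ∫ x, x j ^ 2 ∂(μ.tilted fun x => t * x i) = R ^ 2 := by
  have := hμ.isProbabilityMeasure_tilted i t
  have hsphere : ∀ᵐ x ∂(μ.tilted fun x => t * x i), x ⬝ᵥ x = R ^ 2 :=
    (tilted_absolutelyContinuous μ _).ae_le hμ.ae_dotProduct_self
  simp only [dotProduct, ← sq] at hsphere
  rw [← integral_finsetSum _ fun j _ => hμ.integrable_sq_eval_tilted i j t]
  simp [integral_congr_ae hsphere]

lemma riccati_cgf_eval (hμ : IsUniformOnSphere μ R) (i : ι) {t : ℝ} (ht : 0 < t) :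
    t * (iteratedDeriv 2 (cgf (fun x => x i) μ) t + deriv (cgf (fun x => x i) μ) t ^ 2) +
      (Fintype.card ι - 1) * deriv (cgf (fun x => x i) μ) t = R ^ 2 * t := by
  have := hμ.toIsProbabilityMeasure
  have hcard : ((Finset.univ.erase i).card : ℝ) = Fintype.card ι - 1 := by
    simp [Finset.card_erase_of_mem, Nat.cast_pred (Fintype.card_pos_iff.mpr ⟨i⟩)]
  have hothers : t * ∑ j ∈ Finset.univ.erase i, ∫ x, x j ^ 2 ∂(μ.tilted fun x => t * x i) =
      (Fintype.card ι - 1) * deriv (cgf (fun x => x i) μ) t := by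
    rw [Finset.mul_sum, Finset.sum_congr rfl fun j hj =>
      hμ.mul_integral_sq_eval_tilted (Finset.ne_of_mem_erase hj).symm ht,
      Finset.sum_const, nsmul_eq_mul, hcard]
  rw [← integral_sq_tilted_mul (hμ.mem_interior_eval i t), ← hothers, ← mul_add,
    Finset.add_sum_erase _ (fun j => ∫ x, x j ^ 2 ∂(μ.tilted fun x => t * x i))
      (Finset.mem_univ i), hμ.sum_integral_sq_eval_tilted i t, mul_comm]

lemma analyticAt_cgf_eval (hμ : IsUniformOnSphere μ R) (i : ι) (t : ℝ) :
    AnalyticAt ℝ (cgf (fun x => x i) μ) t :=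
  analyticAt_cgf (hμ.mem_interior_eval i t)

lemma card_sub_one_mul_deriv_cgf_eval_le (hμ : IsUniformOnSphere μ R) (i : ι) {t : ℝ}
    (ht : 0 < t) :
    (Fintype.card ι - 1) * deriv (cgf (fun x => x i) μ) t ≤
      t * (R ^ 2 - deriv (cgf (fun x => x i) μ) t ^ 2) := by
  have hvar : 0 ≤ iteratedDeriv 2 (cgf (fun x => x i) μ) t := by
    rw [← variance_tilted_mul (hμ.mem_interior_eval i t)]
    exact variance_nonneg _ _
  nlinarith [hμ.riccati_cgf_eval i ht, mul_nonneg ht.le hvar]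

lemma mul_sq_sub_sq_deriv_cgf_eval_le [Nontrivial ι] (hμ : IsUniformOnSphere μ R) (i : ι) {t : ℝ}
    (ht : 0 < t) :
    t * (R ^ 2 - deriv (cgf (fun x => x i) μ) t ^ 2) ≤
      Fintype.card ι * deriv (cgf (fun x => x i) μ) t := by
  have hcard : ((Fintype.card ι - 1 : ℕ) : ℝ) = Fintype.card ι - 1 :=
    Nat.cast_pred Fintype.card_pos
  have hK := hμ.analyticAt_cgf_eval i
  have h := mul_const_sub_sq_le_of_riccati
    (v := iteratedDeriv 2 (cgf (fun x => x i) μ)) (c := R ^ 2)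
    (Nat.sub_ne_zero_of_lt Fintype.one_lt_card) (fun t => (hK t).differentiableAt.hasDerivAt)
    (fun t => by
      simpa [iteratedDeriv_succ] using (hK t).deriv.differentiableAt.hasDerivAt)
    (fun t ht => by rw [hcard]; exact hμ.riccati_cgf_eval i ht) ht
  rwa [hcard, sub_add_cancel] at h

lemma deriv_cgf_eval_nonneg [Nontrivial ι] (hμ : IsUniformOnSphere μ R) (i : ι) {t : ℝ}
    (ht : 0 < t) : 0 ≤ deriv (cgf (fun x => x i) μ) t := by
  linarith [hμ.card_sub_one_mul_deriv_cgf_eval_le i ht, hμ.mul_sq_sub_sq_deriv_cgf_eval_le i ht]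

lemma deriv_cgf_eval_le [Nontrivial ι] (hμ : IsUniformOnSphere μ R) (hR : 0 ≤ R) (i : ι)
    {t : ℝ} (ht : 0 < t) : deriv (cgf (fun x => x i) μ) t ≤ R := by
  have hcard : (1 : ℝ) ≤ Fintype.card ι := by exact_mod_cast Fintype.card_pos
  have h := (mul_nonneg (sub_nonneg.mpr hcard) (hμ.deriv_cgf_eval_nonneg i ht)).trans
    (hμ.card_sub_one_mul_deriv_cgf_eval_le i ht)
  exact le_of_sq_le_sq (sub_nonneg.mp (nonneg_of_mul_nonneg_right h ht)) hR

lemma abs_deriv_cgf_eval_sub_le [Nontrivial ι] (hμ : IsUniformOnSphere μ 1) (i : ι)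
    {τ τ₀ s : ℝ} (hτ : 0 < τ) (hs₀ : 0 ≤ s) (hs₁ : s ≤ 1) (hs : s = τ₀ * (1 - s ^ 2)) :
    |deriv (cgf (fun x => x i) μ) (Fintype.card ι * τ) - s| ≤
      |τ - τ₀| + 1 / Fintype.card ι := by
  have hcard : (0 : ℝ) < Fintype.card ι := by exact_mod_cast Fintype.card_pos
  have ht : 0 < Fintype.card ι * τ := by positivity
  refine abs_sub_le_of_eq_mul_one_sub_sq (hμ.deriv_cgf_eval_nonneg i ht) hs₀ hs₁ hτ.le hs ?_
  have hlower := hμ.card_sub_one_mul_deriv_cgf_eval_le i ht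
  have hupper := hμ.mul_sq_sub_sq_deriv_cgf_eval_le i ht
  have hle := hμ.deriv_cgf_eval_le zero_le_one i ht
  rw [le_div_iff₀ hcard, ← abs_of_pos hcard, ← abs_mul, abs_of_pos hcard]
  exact abs_le.mpr ⟨by linarith, by linarith⟩

lemma abs_deriv_cgf_eval_sub_sqrt_div_sqrt_le [Nontrivial ι] (hμ : IsUniformOnSphere μ 1)
    (i : ι) {N γ q : ℝ} (hN : 0 < N) (hγ : 0 < γ) (hq : 0 < q) :
    |deriv (cgf (fun x => x i) μ) (Fintype.card ι * (√q * √γ / N)) - √γ / √(γ + N)| ≤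
      |q - (γ + N)| / N + 1 / Fintype.card ι := by
  have ha : 0 < γ + N := add_pos hγ hN
  have hle : √γ ≤ √(γ + N) := sqrt_le_sqrt (le_add_of_nonneg_right hN.le)
  have hroot : √γ / √(γ + N) = √(γ + N) * √γ / N * (1 - (√γ / √(γ + N)) ^ 2) := by
    rw [div_pow, sq_sqrt hγ.le, sq_sqrt ha.le]
    field_simp
    rw [sq_sqrt ha.le]
    ring
  refine (hμ.abs_deriv_cgf_eval_sub_le i (by positivity) (by positivity)
    ((div_le_one (sqrt_pos.mpr ha)).mpr hle) hroot).trans (add_le_add_left ?_ _)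
  rw [← sub_div, ← sub_mul, abs_div, abs_mul, abs_of_nonneg (sqrt_nonneg γ), abs_of_pos hN]
  gcongr
  exact (mul_le_mul_of_nonneg_left hle (abs_nonneg _)).trans
    (abs_sqrt_sub_sqrt_mul_sqrt_le hq.le ha.le)

end IsUniformOnSphere

section ConstantComposition

open scoped Matrix

variable {σ : ∀ n : ℕ, ℝ → Measure (Fin n → ℝ)} {N γ : ℝ} {n : ℕ} {y : Fin n → ℝ}

lemma UniformSphereFamily.isUniformOnSphere (hσ : UniformSphereFamily σ) (hn : 1 ≤ n) {R : ℝ}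
    (hR : 0 < R) : IsUniformOnSphere (σ n R) R := by
  obtain ⟨hprob, hsphere, hrot⟩ := hσ n hn R hR
  refine ⟨hprob, ?_, hrot⟩
  filter_upwards [mem_ae_iff.mpr hsphere] with x hx
  simpa only [dotProduct, ← sq] using hx

lemma Qcc_eq_mul_mgf (hσ : UniformSphereFamily σ) (hN : 0 < N) (hγ : 0 < γ) (i : Fin n)
    (y : Fin n → ℝ) :
    Qcc σ N γ n y = (2 * π * N) ^ (-(n : ℝ) / 2) * exp (-(y ⬝ᵥ y + n * γ) / (2 * N)) *
      mgf (fun x => x i) (σ n 1) (√(n * γ) * (√(y ⬝ᵥ y) / N)) := by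
  have hn : 1 ≤ n := i.pos
  have hnγ : 0 < n * γ := by positivity
  have hμ := hσ.isUniformOnSphere hn (sqrt_pos.mpr hnγ)
  have hexp : ∀ᵐ x ∂σ n √(n * γ), (2 * π * N) ^ (-(n : ℝ) / 2) *
      exp (-(∑ j, (y j - x j) ^ 2) / (2 * N)) = (2 * π * N) ^ (-(n : ℝ) / 2) *
        exp (-(y ⬝ᵥ y + n * γ) / (2 * N)) * exp ((N⁻¹ • y) ⬝ᵥ x) := by
    filter_upwards [hμ.ae_dotProduct_self] with x hx
    have hsum : ∑ j, (y j - x j) ^ 2 = y ⬝ᵥ y - 2 * (y ⬝ᵥ x) + x ⬝ᵥ x := by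
      simp only [dotProduct, Finset.mul_sum, ← Finset.sum_sub_distrib, ← Finset.sum_add_distrib]
      exact Finset.sum_congr rfl fun j _ => by ring
    rw [hsum, hx, sq_sqrt hnγ.le, mul_assoc _ (exp _) (exp _), ← exp_add, smul_dotProduct,
      smul_eq_mul]
    congr 2
    field_simp
    ring
  have hnorm : √((N⁻¹ • y) ⬝ᵥ (N⁻¹ • y)) = √(y ⬝ᵥ y) / N := by
    rw [smul_dotProduct, dotProduct_smul, smul_smul, ← sq, smul_eq_mul, sqrt_mul (sq_nonneg _),
      sqrt_sq (inv_nonneg.mpr hN.le), inv_mul_eq_div]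
  rw [Qcc, integral_congr_ae hexp, integral_const_mul, hμ.integral_exp_dotProduct i, hnorm,
    ← hμ.mgf_eval_mul_comm (hσ.isUniformOnSphere hn one_pos) (sqrt_nonneg _) zero_le_one i
      (by positivity), one_mul]

lemma Qcc_pos (hσ : UniformSphereFamily σ) (hN : 0 < N) (hγ : 0 < γ) (hn : 0 < n)
    (y : Fin n → ℝ) : 0 < Qcc σ N γ n y := by
  have hmgf := (hσ.isUniformOnSphere hn one_pos).mgf_eval_pos ⟨0, hn⟩
  rw [Qcc_eq_mul_mgf hσ hN hγ ⟨0, hn⟩]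
  exact mul_pos (by positivity) (hmgf _)

lemma log_Qcc_eq (hσ : UniformSphereFamily σ) (hN : 0 < N) (hγ : 0 < γ) (i : Fin n) {q : ℝ}
    (hy : y ⬝ᵥ y = n * q) :
    log (Qcc σ N γ n y) = log ((2 * π * N) ^ (-(n : ℝ) / 2)) - n * (q + γ) / (2 * N) +
      cgf (fun x => x i) (σ n 1) (n * (√q * √γ / N)) := by
  have hmgf := (hσ.isUniformOnSphere i.pos one_pos).mgf_eval_pos i
  have harg : √(n * γ) * (√(n * q) / N) = n * (√q * √γ / N) := by
    rw [sqrt_mul n.cast_nonneg, sqrt_mul n.cast_nonneg]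
    linear_combination √γ * √q / N * mul_self_sqrt (n.cast_nonneg (α := ℝ))
  rw [Qcc_eq_mul_mgf hσ hN hγ i, hy, harg, log_mul (by positivity) (hmgf _).ne',
    log_mul (by positivity) (exp_pos _).ne', log_exp, cgf]
  ring

lemma hasDerivAt_log_Qcc (hσ : UniformSphereFamily σ) (hN : 0 < N) (hγ : 0 < γ) (i : Fin n)
    {q : ℝ} (hy : y ⬝ᵥ y = n * q) :
    HasDerivAt (fun γ => log (Qcc σ N γ n y))
      (n / (2 * N) *
        (√q / √γ * deriv (cgf (fun x => x i) (σ n 1)) (n * (√q * √γ / N)) - 1)) γ := by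
  have hcgf := ((hσ.isUniformOnSphere i.pos one_pos).analyticAt_cgf_eval i
    (n * (√q * √γ / N))).differentiableAt.hasDerivAt
  have harg := ((((hasDerivAt_id γ).sqrt hγ.ne').const_mul √q).div_const N).const_mul (n : ℝ)
  have hquad := ((((hasDerivAt_id γ).const_add q).const_mul (n : ℝ)).div_const (2 * N)).const_sub
    (log ((2 * π * N) ^ (-(n : ℝ) / 2)))
  refine ((hquad.add (hcgf.comp γ harg)).congr_of_eventuallyEq ?_).congr_deriv ?_
  · filter_upwards [lt_mem_nhds hγ] with γ hγ using log_Qcc_eq hσ hN hγ i hy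
  · simp only [id]
    ring

lemma abs_deriv_log_Qcc_le (hσ : UniformSphereFamily σ) (hN : 0 < N) (hγ : 0 < γ) (hn : 2 ≤ n)
    {q : ℝ} (hq : 0 < q) (hy : y ⬝ᵥ y = n * q) :
    |deriv (fun γ => log (Qcc σ N γ n y)) γ| ≤
      n / (2 * N) *
        (√q / √γ * (|q - (γ + N)| / N + 1 / n) + |q - (γ + N)| / (γ + N)) := by
  have : Nontrivial (Fin n) := Fin.nontrivial_iff_two_le.mpr hn
  let i : Fin n := ⟨0, by omega⟩
  have ha : 0 < γ + N := add_pos hγ hN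
  have hcgf := (hσ.isUniformOnSphere i.pos one_pos).abs_deriv_cgf_eval_sub_sqrt_div_sqrt_le i
    hN hγ hq
  rw [Fintype.card_fin] at hcgf
  rw [(hasDerivAt_log_Qcc hσ hN hγ i hy).deriv]
  set m := deriv (cgf (fun x => x i) (σ n 1)) (n * (√q * √γ / N))
  have hsplit : √q / √γ * m - 1 =
      √q / √γ * (m - √γ / √(γ + N)) + (√q / √(γ + N) - 1) := by
    field_simp
    ring
  rw [abs_mul, abs_of_nonneg (by positivity : 0 ≤ n / (2 * N)), hsplit]
  refine mul_le_mul_of_nonneg_left ((abs_add_le _ _).trans (add_le_add ?_ ?_)) (by positivity)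
  · rw [abs_mul, abs_of_nonneg (by positivity : 0 ≤ √q / √γ)]
    gcongr
  · exact abs_sqrt_div_sqrt_sub_one_le hq.le ha

lemma abs_deriv_log_Qcc_le_of_sqrt_div_sqrt_le (hσ : UniformSphereFamily σ) (hN : 0 < N)
    (hγ : 0 < γ) (hn : 2 ≤ n) {q κ d : ℝ} (hq : 0 < q) (hy : y ⬝ᵥ y = n * q) (hκ : √q / √γ ≤ κ)
    (hd : |q - (γ + N)| ≤ d) :
    |deriv (fun γ => log (Qcc σ N γ n y)) γ| ≤ (κ + (κ + 1) / N) / (2 * N) * (1 + n * d) := by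
  have hd₀ : 0 ≤ d := (abs_nonneg _).trans hd
  have hκ₀ : 0 ≤ κ := le_trans (by positivity) hκ
  have hterms : √q / √γ * (|q - (γ + N)| / N + 1 / n) + |q - (γ + N)| / (γ + N) ≤
      κ * (d / N + 1 / n) + d / N := by
    gcongr
    linarith
  calc _ ≤ n / (2 * N) * (κ * (d / N + 1 / n) + d / N) :=
        (abs_deriv_log_Qcc_le hσ hN hγ hn hq hy).trans (by gcongr)
    _ = (κ + (κ + 1) / N * (n * d)) / (2 * N) := by
      field_simp
      ring
    _ ≤ (κ * (1 + n * d) + (κ + 1) / N * (1 + n * d)) / (2 * N) := by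
      gcongr
      · exact le_mul_of_one_le_right hκ₀ (le_add_of_nonneg_right (by positivity))
      · exact le_add_of_nonneg_left zero_le_one
    _ = (κ + (κ + 1) / N) / (2 * N) * (1 + n * d) := by ring

lemma exists_abs_log_Qcc_sub_log_Qcc_le (hσ : UniformSphereFamily σ) (hN : 0 < N) {Γ : ℝ}
    (hΓ : 0 < Γ) : ∃ C > 0, ∀ n : ℕ, 2 ≤ n → ∀ ε Δ : ℝ, |ε| ≤ Γ / 2 → Δ ≤ (Γ + N) / 2 →
      ∀ y : Fin n → ℝ, |(∑ i, y i ^ 2) / n - (Γ + N)| ≤ Δ →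
        |log (Qcc σ N (Γ + ε) n y) - log (Qcc σ N Γ n y)| ≤
          C * |ε| * (1 + n * (|ε| + Δ)) := by
  let κ := √(2 * (Γ + N)) / √(Γ / 2)
  refine ⟨(κ + (κ + 1) / N) / (2 * N), by positivity, fun n hn ε Δ hε hΔ y hyΔ => ?_⟩
  have hn₀ : (n : ℝ) ≠ 0 := by exact_mod_cast (by omega : n ≠ 0)
  set q := (∑ i, y i ^ 2) / n with hq
  have hy : y ⬝ᵥ y = n * q := by
    rw [hq, mul_div_cancel₀ _ hn₀]
    simp only [dotProduct, ← sq]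
  have hqΔ := abs_le.mp hyΔ
  have hγ : ∀ γ ∈ Set.uIcc Γ (Γ + ε), |γ - Γ| ≤ |ε| := fun γ hγ => by
    simpa using Set.abs_sub_left_of_mem_uIcc hγ
  have hhalf : ∀ γ ∈ Set.uIcc Γ (Γ + ε), Γ / 2 ≤ γ := fun γ h => by
    linarith [(abs_le.mp (hγ γ h)).1]
  have hderiv : ∀ γ ∈ Set.uIcc Γ (Γ + ε), |deriv (fun γ => log (Qcc σ N γ n y)) γ| ≤
      (κ + (κ + 1) / N) / (2 * N) * (1 + n * (|ε| + Δ)) := fun γ h => by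
    have hγ₀ : 0 < γ := (half_pos hΓ).trans_le (hhalf γ h)
    refine abs_deriv_log_Qcc_le_of_sqrt_div_sqrt_le hσ hN hγ₀ hn (by linarith) hy ?_ ?_
    · simp only [κ]
      gcongr
      · linarith
      · exact hhalf γ h
    · calc |q - (γ + N)| = |(Γ - γ) + (q - (Γ + N))| := by ring_nf
        _ ≤ |Γ - γ| + |q - (Γ + N)| := abs_add_le _ _
        _ ≤ |ε| + Δ := add_le_add (abs_sub_comm γ Γ ▸ hγ γ h) hyΔ
  have h := (convex_uIcc Γ (Γ + ε)).norm_image_sub_le_of_norm_deriv_le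
    (fun γ h => (hasDerivAt_log_Qcc hσ hN ((half_pos hΓ).trans_le (hhalf γ h)) ⟨0, by omega⟩
      hy).differentiableAt) hderiv Set.left_mem_uIcc Set.right_mem_uIcc
  rw [add_sub_cancel_left] at h
  exact h.trans_eq (by simp; ring)

end ConstantComposition

/-- uniform `O(log n + nε² + nΔ² + n|ε|Δ)` bound on
`|log(Q^cc_{Γ+ε,n}(y)/Q^cc_{Γ,n}(y))|` over the typical set
`{y : Γ+N−Δ ≤ ‖y‖²/n ≤ Γ+N+Δ}`. -/
theorem log_ratio_Qcc_Qcc_bound (N Γ : ℝ) (hN : 0 < N) (hΓ : 0 < Γ)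
    (σ : ∀ n : ℕ, ℝ → Measure (Fin n → ℝ)) (hσ : UniformSphereFamily σ) :
    ∃ (C : ℝ) (n₀ : ℕ) (ε₀ Δ₀ : ℝ), 0 < C ∧ 0 < n₀ ∧ 0 < ε₀ ∧ ε₀ < Γ ∧ 0 < Δ₀ ∧
      ∀ n : ℕ, n₀ ≤ n → ∀ ε : ℝ, |ε| ≤ ε₀ → ∀ Δ : ℝ, 0 ≤ Δ → Δ ≤ Δ₀ →
        ∀ y : Fin n → ℝ,
          Γ + N - Δ ≤ (∑ i, (y i)^2) / n → (∑ i, (y i)^2) / n ≤ Γ + N + Δ →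
          |Real.log (Qcc σ N (Γ + ε) n y / Qcc σ N Γ n y)|
            ≤ C * (Real.log n + n * ε^2 + n * Δ^2 + n * |ε| * Δ) := by
  obtain ⟨C, hC, hlog⟩ := exists_abs_log_Qcc_sub_log_Qcc_le hσ hN hΓ
  refine ⟨C * (Γ + 1), 3, Γ / 2, (Γ + N) / 2, by positivity, by norm_num, by positivity,
    half_lt_self hΓ, by positivity, fun n hn ε hε Δ hΔ₀ hΔ y hlower hupper => ?_⟩
  have hlogn : 1 ≤ log n := by
    rw [le_log_iff_exp_le (by positivity)]
    exact exp_one_lt_three.le.trans (by exact_mod_cast hn)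
  have hε' : |ε| ≤ Γ * log n := by nlinarith
  rw [log_div (Qcc_pos hσ hN (by linarith [neg_abs_le ε]) (by omega) y).ne'
    (Qcc_pos hσ hN hΓ (by omega) y).ne']
  calc _ ≤ C * |ε| * (1 + n * (|ε| + Δ)) := hlog n (by omega) ε Δ hε hΔ y
        (abs_le.mpr ⟨by linarith, by linarith⟩)
    _ = C * (|ε| + (n * ε ^ 2 + n * |ε| * Δ)) := by rw [← sq_abs]; ring
    _ ≤ C * (Γ * log n + (n * ε ^ 2 + n * |ε| * Δ)) := by gcongr
    _ ≤ C * ((Γ + 1) * (log n + n * ε ^ 2 + n * Δ ^ 2 + n * |ε| * Δ)) := by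
      have hslack : 0 ≤ Γ * (n * ε ^ 2 + n * Δ ^ 2 + n * |ε| * Δ) + log n + n * Δ ^ 2 := by
        positivity
      exact mul_le_mul_of_nonneg_left (by linarith) hC.le
    _ = _ := (mul_assoc _ _ _).symm
end

section
/- Fix N > 0, n ≥ 1, R > 0 and θ > 0, and let M = ⌈exp(nR)⌉. Let P be a Borel probability measure on ℝⁿ, let w(y|x) = (2πN)^{-n/2} exp(−‖y−x‖²/(2N)), and let q(y) = ∫ w(y|x) dP(x) be the output density. Construct a random code as follows: draw codewords X₁,…,X_M i.i.d. from P; given channel output y, the decoder outputs the smallest index m ∈ {1,…,M} such that (1/n)·log( w(y|X_m)/q(y) ) > R + θ, and outputs 1 if no such index exists. Then the average error probability — the probability, over a uniformly distributed message m ∈ {1,…,M}, the i.i.d. codebook, and independent noise Z ~ N(0, N·Iₙ), that the decoder applied to X_m + Z does not output m — satisfies: average error ≤ Pr_{X~P, Y=X+Z}( (1/n)·log( w(Y|X)/q(Y) ) ≤ R + θ ) + exp(−nθ). -/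
open Real MeasureTheory ProbabilityTheory Classical

/-- The `n`-letter AWGN transition density `w(y|x)` with noise variance `N`. -/
noncomputable def w (N : ℝ) (n : ℕ) (y x : Fin n → ℝ) : ℝ :=
  (2 * π * N) ^ (-(n : ℝ)/2) * Real.exp (-(∑ i, (y i - x i)^2) / (2 * N))

/-- The output density `q(y) = ∫ w(y|x) dP(x)` induced by the input law `P`. -/
noncomputable def q (N : ℝ) (n : ℕ) (P : Measure (Fin n → ℝ)) (y : Fin n → ℝ) : ℝ :=
  ∫ x, w N n y x ∂P

/-- Threshold decoder: outputs the smallest index `m` whose codeword `c m` satisfies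
`(1/n)·log(w(y|c m)/q(y)) > R + θ`, and outputs the first message if no index does. -/
noncomputable def decode (N : ℝ) (n : ℕ) (P : Measure (Fin n → ℝ)) (R θ : ℝ)
    {M : ℕ} (hM : 0 < M) (c : Fin M → (Fin n → ℝ)) (y : Fin n → ℝ) : Fin M :=
  if h : (Finset.univ.filter fun m : Fin M =>
      R + θ < (1/(n : ℝ)) * Real.log (w N n y (c m) / q N n P y)).Nonempty
  then (Finset.univ.filter fun m : Fin M =>
      R + θ < (1/(n : ℝ)) * Real.log (w N n y (c m) / q N n P y)).min' h
  else ⟨0, hM⟩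

/-!
The decoder errs on `m` only if the sent codeword fails the threshold test or some other codeword
passes it. The first event has the law of the pair `(X, Y)`. In the second, the competing codeword
`X'` is independent of `Y`, so `E[w(y|X')/q(y)] ≤ 1` for every `y`, and Markov's inequality bounds
the probability of passing the test by `exp(-n(R + θ))`; there are `⌈exp(nR)⌉ - 1 ≤ exp(nR)`
competitors.
-/

section ProductMeasure

lemma measurePreserving_eval_pair {ι : Type*} [Fintype ι] {α : ι → Type*}
    [∀ i, MeasurableSpace (α i)] (μ : ∀ i, Measure (α i)) [∀ i, IsProbabilityMeasure (μ i)]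
    {i j : ι} (hij : i ≠ j) :
    MeasurePreserving (fun a : ∀ k, α k ↦ (a i, a j)) (Measure.pi μ) ((μ i).prod (μ j)) := by
  have hindep : IndepFun (fun a : ∀ k, α k ↦ a i) (fun a ↦ a j) (Measure.pi μ) :=
    (iIndepFun_pi (X := fun _ x ↦ x) fun _ ↦ aemeasurable_id).indepFun hij
  refine ⟨by fun_prop, ?_⟩
  rw [hindep.map_prod_eq_prod_map_map (measurable_pi_apply i).aemeasurable
      (measurable_pi_apply j).aemeasurable,
    (measurePreserving_eval μ i).map_eq, (measurePreserving_eval μ j).map_eq]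

lemma measureReal_prod_le_of_forall_section_le {α β : Type*} [MeasurableSpace α]
    [MeasurableSpace β] {μ : Measure α} [IsFiniteMeasure μ] {ν : Measure β}
    [IsProbabilityMeasure ν] {s : Set (α × β)} (hs : MeasurableSet s) {ε : ℝ}
    (h : ∀ y, μ.real ((·, y) ⁻¹' s) ≤ ε) : (μ.prod ν).real s ≤ ε := by
  obtain ⟨y₀⟩ : Nonempty β := ν.nonempty_of_neZero
  refine ENNReal.toReal_le_of_le_ofReal (measureReal_nonneg.trans (h y₀)) ?_
  rw [Measure.prod_apply_symm hs]
  exact lintegral_le_const <| ae_of_all _ fun y ↦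
    (ENNReal.le_ofReal_iff_toReal_le (measure_ne_top μ _) (measureReal_nonneg.trans (h y))).2 (h y)

end ProductMeasure

section InformationDensity

variable {𝓧 𝓨 : Type*} [MeasurableSpace 𝓧] [MeasurableSpace 𝓨]

/-- The information density `log (v(y|x) / ∫ v(y|x') dP(x'))` of the likelihood `v` under the input
law `P`. Like `w`, the likelihood takes the output first. -/
noncomputable def infoDensity (v : 𝓨 → 𝓧 → ℝ) (P : Measure 𝓧) (y : 𝓨) (x : 𝓧) : ℝ :=
  Real.log (v y x / ∫ x', v y x' ∂P)

lemma measurable_infoDensity {v : 𝓨 → 𝓧 → ℝ} (hv : Measurable (Function.uncurry v))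
    (P : Measure 𝓧) [SFinite P] : Measurable (Function.uncurry (infoDensity v P)) := by
  have hint : Measurable fun y ↦ ∫ x, v y x ∂P :=
    hv.stronglyMeasurable.integral_prod_right.measurable
  exact (hv.div (hint.comp measurable_fst)).log

lemma measureReal_lt_log_div_integral_le_exp_neg {P : Measure 𝓧} [IsProbabilityMeasure P]
    {f : 𝓧 → ℝ} (hf : 0 ≤ f) (hint : Integrable f P) (t : ℝ) :
    P.real {x | t < Real.log (f x / ∫ x', f x' ∂P)} ≤ Real.exp (-t) := by
  set r : 𝓧 → ℝ := fun x ↦ f x / ∫ x', f x' ∂P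
  have hr : 0 ≤ r := fun x ↦ div_nonneg (hf x) (integral_nonneg hf)
  rcases lt_or_ge t 0 with ht | ht
  · exact measureReal_le_one.trans (Real.one_le_exp (neg_nonneg.2 ht.le))
  have hsub : {x | t < Real.log (r x)} ⊆ {x | Real.exp t ≤ r x} := by
    intro x (hx : t < Real.log (r x))
    -- Since `t ≥ 0`, the convention `log 0 = 0` does not put the zeros of `r` in this set.
    have hpos : 0 < r x := (hr x).lt_of_ne' fun h0 ↦ by simp [h0, ht.not_gt] at hx
    exact ((Real.lt_log_iff_exp_lt hpos).1 hx).le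
  have hmean : ∫ x, r x ∂P ≤ 1 := (integral_div _ _).trans_le (div_self_le_one _)
  have hmarkov : Real.exp t * P.real {x | Real.exp t ≤ r x} ≤ ∫ x, r x ∂P :=
    mul_meas_ge_le_integral_of_nonneg (ae_of_all _ hr) (hint.div_const _) _
  calc P.real {x | t < Real.log (r x)}
      ≤ P.real {x | Real.exp t ≤ r x} := measureReal_mono hsub
    _ ≤ 1 / Real.exp t := (le_div_iff₀' (Real.exp_pos t)).2 (hmarkov.trans hmean)
    _ = Real.exp (-t) := by rw [one_div, Real.exp_neg]

end InformationDensity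

section ThresholdDecoder

/-- The decoder that returns the first message whose codeword has score above `t` against the
received `y`, and `m₀` if there is none. -/
noncomputable def thresholdDecoder {ι 𝓧 𝓨 : Type*} [Fintype ι] [LinearOrder ι]
    (s : 𝓨 → 𝓧 → ℝ) (t : ℝ) (m₀ : ι) (c : ι → 𝓧) (y : 𝓨) : ι :=
  if h : (Finset.univ.filter fun m ↦ t < s y (c m)).Nonempty
  then (Finset.univ.filter fun m ↦ t < s y (c m)).min' h
  else m₀

variable {ι 𝓧 𝓨 𝓩 : Type*} [Fintype ι]

lemma le_or_exists_lt_of_thresholdDecoder_ne [LinearOrder ι] {s : 𝓨 → 𝓧 → ℝ} {t : ℝ} {m₀ m : ι}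
    {c : ι → 𝓧} {y : 𝓨} (h : thresholdDecoder s t m₀ c y ≠ m) :
    s y (c m) ≤ t ∨ ∃ k ≠ m, t < s y (c k) := by
  refine or_iff_not_imp_left.2 fun hm ↦ ⟨_, h, ?_⟩
  have hne : (Finset.univ.filter fun k ↦ t < s y (c k)).Nonempty :=
    ⟨m, Finset.mem_filter.2 ⟨Finset.mem_univ m, not_le.1 hm⟩⟩
  rw [thresholdDecoder, dif_pos hne]
  exact (Finset.mem_filter.1 (Finset.min'_mem _ hne)).2

variable [MeasurableSpace 𝓧] [MeasurableSpace 𝓨] [MeasurableSpace 𝓩]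
  {P : Measure 𝓧} [IsProbabilityMeasure P] {ν : Measure 𝓩} [IsProbabilityMeasure ν]
  {f : 𝓧 → 𝓩 → 𝓨} {s : 𝓨 → 𝓧 → ℝ} {t ε : ℝ}

lemma measurePreserving_codeword_output (hf : Measurable (Function.uncurry f)) {k m : ι}
    (hkm : k ≠ m) :
    MeasurePreserving (fun p : (ι → 𝓧) × 𝓩 ↦ (p.1 k, f (p.1 m) p.2))
      ((Measure.pi fun _ ↦ P).prod ν) (P.prod ((P.prod ν).map (Function.uncurry f))) :=
  have : IsProbabilityMeasure ((P.prod ν).map (Function.uncurry f)) :=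
    Measure.isProbabilityMeasure_map hf.aemeasurable
  ((MeasurePreserving.id P).prod (hf.measurePreserving (P.prod ν))).comp <|
    (measurePreserving_prodAssoc P P ν).comp <|
      (measurePreserving_eval_pair (fun _ ↦ P) hkm).prod (MeasurePreserving.id ν)

lemma measureReal_lt_score_competitor_le (hf : Measurable (Function.uncurry f))
    (hs : Measurable (Function.uncurry s)) (hε : ∀ y, P.real {x | t < s y x} ≤ ε) {k m : ι}
    (hkm : k ≠ m) :
    ((Measure.pi fun _ ↦ P).prod ν).real
      {p : (ι → 𝓧) × 𝓩 | t < s (f (p.1 m) p.2) (p.1 k)} ≤ ε := by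
  have hset : MeasurableSet {q : 𝓧 × 𝓨 | t < s q.2 q.1} :=
    measurableSet_lt measurable_const (hs.comp measurable_swap)
  have : IsProbabilityMeasure ((P.prod ν).map (Function.uncurry f)) :=
    Measure.isProbabilityMeasure_map hf.aemeasurable
  calc ((Measure.pi fun _ ↦ P).prod ν).real
        {p : (ι → 𝓧) × 𝓩 | t < s (f (p.1 m) p.2) (p.1 k)}
      = (P.prod ((P.prod ν).map (Function.uncurry f))).real {q | t < s q.2 q.1} :=
        (measurePreserving_codeword_output hf hkm).measureReal_preimage hset.nullMeasurableSet
    _ ≤ ε := measureReal_prod_le_of_forall_section_le hset hε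

lemma measureReal_score_sent_le_eq (hf : Measurable (Function.uncurry f))
    (hs : Measurable (Function.uncurry s)) (m : ι) :
    ((Measure.pi fun _ ↦ P).prod ν).real
        {p : (ι → 𝓧) × 𝓩 | s (f (p.1 m) p.2) (p.1 m) ≤ t}
      = (P.prod ν).real {p | s (f p.1 p.2) p.1 ≤ t} := by
  have hset : MeasurableSet {p : 𝓧 × 𝓩 | s (f p.1 p.2) p.1 ≤ t} :=
    measurableSet_le (hs.comp (hf.prodMk measurable_fst)) measurable_const
  exact ((measurePreserving_eval (fun _ ↦ P) m).prod
    (MeasurePreserving.id ν)).measureReal_preimage hset.nullMeasurableSet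

lemma measureReal_thresholdDecoder_ne_le [LinearOrder ι] (hf : Measurable (Function.uncurry f))
    (hs : Measurable (Function.uncurry s)) (hε : ∀ y, P.real {x | t < s y x} ≤ ε) (m₀ m : ι) :
    ((Measure.pi fun _ ↦ P).prod ν).real
        {p : (ι → 𝓧) × 𝓩 | thresholdDecoder s t m₀ p.1 (f (p.1 m) p.2) ≠ m}
      ≤ (P.prod ν).real {p | s (f p.1 p.2) p.1 ≤ t} + (Fintype.card ι - 1) * ε := by
  set μ := (Measure.pi fun _ : ι ↦ P).prod ν
  let sentFails : Set ((ι → 𝓧) × 𝓩) := {p | s (f (p.1 m) p.2) (p.1 m) ≤ t}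
  let passes (k : ι) : Set ((ι → 𝓧) × 𝓩) := {p | t < s (f (p.1 m) p.2) (p.1 k)}
  have hsub : {p : (ι → 𝓧) × 𝓩 | thresholdDecoder s t m₀ p.1 (f (p.1 m) p.2) ≠ m} ⊆
      sentFails ∪ ⋃ k ∈ Finset.univ.erase m, passes k := by
    intro p hp
    rcases le_or_exists_lt_of_thresholdDecoder_ne hp with hle | ⟨k, hk, hlt⟩
    · exact Or.inl hle
    · exact Or.inr (Set.mem_biUnion (Finset.mem_erase.2 ⟨hk, Finset.mem_univ k⟩) hlt)
  have hcompetitors : ∑ k ∈ Finset.univ.erase m, μ.real (passes k)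
      ≤ (Fintype.card ι - 1) * ε := by
    refine (Finset.sum_le_card_nsmul _ _ ε fun k hk ↦
      measureReal_lt_score_competitor_le hf hs hε (Finset.ne_of_mem_erase hk)).trans_eq ?_
    rw [nsmul_eq_mul, Finset.cast_card_erase_of_mem (Finset.mem_univ m), Finset.card_univ]
  calc _ ≤ μ.real (sentFails ∪ ⋃ k ∈ Finset.univ.erase m, passes k) := measureReal_mono hsub
    _ ≤ μ.real sentFails + ∑ k ∈ Finset.univ.erase m, μ.real (passes k) :=
        (measureReal_union_le _ _).trans
          (add_le_add_right (measureReal_biUnion_finset_le _ _) _)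
    _ ≤ _ := add_le_add (measureReal_score_sent_le_eq hf hs m).le hcompetitors

-- `f` is a functional representation of the channel, driven by the noise law `ν`, and `v` is the
-- (possibly mismatched) likelihood used by the decoder.
theorem random_coding_error_bound_general (hf : Measurable (Function.uncurry f)) {v : 𝓨 → 𝓧 → ℝ}
    (hv : Measurable (Function.uncurry v)) (hv0 : ∀ y, 0 ≤ v y) (hint : ∀ y, Integrable (v y) P)
    {n : ℕ} (hn : 0 < n) (R θ : ℝ) {M : ℕ} (hM : M = ⌈Real.exp (n * R)⌉₊) (m₀ : Fin M) :
    (M : ℝ)⁻¹ * ∑ m : Fin M, ((Measure.pi fun _ : Fin M ↦ P).prod ν).real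
        {p | thresholdDecoder (fun y x ↦ 1 / (n : ℝ) * infoDensity v P y x) (R + θ) m₀
          p.1 (f (p.1 m) p.2) ≠ m}
      ≤ (P.prod ν).real {p | 1 / (n : ℝ) * infoDensity v P (f p.1 p.2) p.1 ≤ R + θ}
        + Real.exp (-(n * θ)) := by
  have hcompetitor (y : 𝓨) : P.real {x | R + θ < 1 / (n : ℝ) * infoDensity v P y x}
      ≤ Real.exp (-(n * (R + θ))) := by
    simp only [one_div, lt_inv_mul_iff₀ (Nat.cast_pos.2 hn : (0 : ℝ) < n)]
    exact measureReal_lt_log_div_integral_le_exp_neg (hv0 y) (hint y) _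
  have hunion : ((Fintype.card (Fin M) : ℝ) - 1) * Real.exp (-(n * (R + θ)))
      ≤ Real.exp (-(n * θ)) := by
    have hcard : (M : ℝ) - 1 ≤ Real.exp (n * R) :=
      sub_le_iff_le_add.2 (hM ▸ (Nat.ceil_lt_add_one (Real.exp_pos _).le).le)
    calc _ ≤ Real.exp (n * R) * Real.exp (-(n * (R + θ))) := by rw [Fintype.card_fin]; gcongr
      _ = Real.exp (-(n * θ)) := by rw [← Real.exp_add]; ring_nf
  rw [inv_mul_le_iff₀ (Nat.cast_pos.2 m₀.pos), ← nsmul_eq_mul]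
  refine (Finset.sum_le_card_nsmul _ _ _ fun m _ ↦ ?_).trans_eq (by rw [Finset.card_fin])
  exact (measureReal_thresholdDecoder_ne_le hf ((measurable_infoDensity hv P).const_mul _)
    hcompetitor m₀ m).trans (add_le_add_right hunion _)

end ThresholdDecoder

section GaussianDensity

lemma continuous_w (N : ℝ) (n : ℕ) : Continuous (Function.uncurry (w N n)) := by
  unfold w Function.uncurry
  fun_prop

variable {N : ℝ} (hN : 0 ≤ N) {n : ℕ}
include hN

lemma w_nonneg (y x : Fin n → ℝ) : 0 ≤ w N n y x := by
  unfold w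
  positivity

lemma w_le (y x : Fin n → ℝ) : w N n y x ≤ (2 * π * N) ^ (-(n : ℝ) / 2) := by
  refine mul_le_of_le_one_right (by positivity) (Real.exp_le_one_iff.2 ?_)
  exact div_nonpos_of_nonpos_of_nonneg
    (neg_nonpos.2 (Finset.sum_nonneg fun _ _ ↦ sq_nonneg _)) (by positivity)

lemma integrable_w (P : Measure (Fin n → ℝ)) [IsFiniteMeasure P] (y : Fin n → ℝ) :
    Integrable (w N n y) P :=
  .of_bound ((continuous_w N n).comp (Continuous.prodMk_right y)).aestronglyMeasurable _ <|
    ae_of_all _ fun x ↦ (Real.norm_of_nonneg (w_nonneg hN y x)).trans_le (w_le hN y x)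

end GaussianDensity

/-- random coding bound: with `M = ⌈exp(nR)⌉` i.i.d. codewords drawn
from `P` and the threshold decoder, the average error probability is at most
`Pr((1/n)·log(w(Y|X)/q(Y)) ≤ R + θ) + exp(−nθ)`. -/
theorem random_coding_error_bound (N : ℝ) (hN : 0 < N) (n : ℕ) (hn : 1 ≤ n)
    (R θ : ℝ) (hR : 0 < R) (hθ : 0 < θ)
    (M : ℕ) (hM : M = ⌈Real.exp (n * R)⌉₊) (hMpos : 0 < M)
    (P : Measure (Fin n → ℝ)) (hP : IsProbabilityMeasure P) :
    (M : ℝ)⁻¹ * ∑ m : Fin M,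
        (((Measure.pi fun _ : Fin M => P).prod
            (Measure.pi fun _ : Fin n => gaussianReal 0 N.toNNReal))
          {p : (Fin M → (Fin n → ℝ)) × (Fin n → ℝ) |
            decode N n P R θ hMpos p.1 (p.1 m + p.2) ≠ m}).toReal
      ≤ ((P.prod (Measure.pi fun _ : Fin n => gaussianReal 0 N.toNNReal))
          {p : (Fin n → ℝ) × (Fin n → ℝ) |
            (1/(n : ℝ)) * Real.log (w N n (p.1 + p.2) p.1 / q N n P (p.1 + p.2)) ≤ R + θ}).toReal
        + Real.exp (-(n * θ)) := by
  exact random_coding_error_bound_general (measurable_fst.add measurable_snd)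
    (continuous_w N n).measurable (w_nonneg hN.le) (integrable_w hN.le P) hn R θ hM ⟨0, hMpos⟩
end
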